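/- arXiv:math/0211215 — 4 statements merged into one kernel-verified Lean document; each statement's English description precedes it below -/
import Mathlib

section
/- For every compact metrizable space X there exists a continuous regular linear extension operator u : PM → PM(X); that is, a map u assigning to each continuous pseudometric ρ defined on a nonempty closed subset dom ρ of X a continuous pseudometric u(ρ) on all of X, such that: (i) u(ρ) restricted to dom ρ × dom ρ equals ρ; (ii) u(cρ) = c·u(ρ) for every c ≥ 0 and u(ρ + λ) = u(ρ) + u(λ) whenever dom ρ = dom λ; (iii) sup_{x,y ∈ X} u(ρ)(x,y) = sup_{x,y ∈ dom ρ} ρ(x,y); and (iv) u is continuous with respect to the topology on PM induced from exp(X × X × ℝ) by identifying pseudometrics with their graphs. -/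
/- STATEMENT 6: For every compact metrizable space X there exists a continuous
   regular linear extension operator u : PM → PM(X): (i) u(ρ) extends ρ;
   (ii) u(cρ) = c·u(ρ) for c ≥ 0 and u(ρ+λ) = u(ρ)+u(λ) when dom ρ = dom λ;
   (iii) sup u(ρ) = sup ρ; (iv) u is continuous for the topology on PM induced
   from exp(X × X × ℝ) (Vietoris) by identifying pseudometrics with graphs. -/
open TopologicalSpace Set

noncomputable section

/-- The Vietoris topology on subsets of a topological space, generated by the
sets `{K | K ⊆ U}` and `{K | (K ∩ U).Nonempty}` for `U` open. -/
def vietoris (Y : Type*) [TopologicalSpace Y] : TopologicalSpace (Set Y) :=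
  TopologicalSpace.generateFrom
    {S | ∃ U : Set Y, IsOpen U ∧ (S = {K | K ⊆ U} ∨ S = {K : Set Y | (K ∩ U).Nonempty})}

/-- A partial continuous pseudometric on the space `X`: a continuous
pseudometric whose domain is a nonempty closed subset of `X`.  (Only the
values of `d` on `dom × dom` are relevant.) -/
structure PartialCPM (X : Type*) [TopologicalSpace X] where
  dom : Set X
  dom_ne : dom.Nonempty
  dom_closed : IsClosed dom
  d : X → X → ℝ
  refl : ∀ x ∈ dom, d x x = 0
  symm : ∀ x ∈ dom, ∀ y ∈ dom, d x y = d y x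
  triangle : ∀ x ∈ dom, ∀ y ∈ dom, ∀ z ∈ dom, d x z ≤ d x y + d y z
  cont : ContinuousOn (fun p : X × X => d p.1 p.2) (dom ×ˢ dom)

/-- A continuous pseudometric on (all of) the space `X`. -/
structure CPM (X : Type*) [TopologicalSpace X] where
  d : X → X → ℝ
  refl : ∀ x, d x x = 0
  symm : ∀ x y, d x y = d y x
  triangle : ∀ x y z, d x z ≤ d x y + d y z
  cont : Continuous fun p : X × X => d p.1 p.2

variable {X : Type*} [TopologicalSpace X]

/-- The graph of a partial pseudometric, a subset of `X × X × ℝ`. -/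
def PartialCPM.graph (ρ : PartialCPM X) : Set (X × X × ℝ) :=
  {p | p.1 ∈ ρ.dom ∧ p.2.1 ∈ ρ.dom ∧ p.2.2 = ρ.d p.1 p.2.1}

/-- PM is topologized via graphs in `exp (X × X × ℝ)` (Vietoris topology). -/
instance : TopologicalSpace (PartialCPM X) :=
  TopologicalSpace.induced PartialCPM.graph (vietoris (X × X × ℝ))

/-- The graph of a continuous pseudometric on `X`. -/
def CPM.graph (ρ : CPM X) : Set (X × X × ℝ) :=
  {p | p.2.2 = ρ.d p.1 p.2.1}

/-- PM(X) is topologized via graphs in `exp (X × X × ℝ)` (Vietoris topology). -/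
instance : TopologicalSpace (CPM X) :=
  TopologicalSpace.induced CPM.graph (vietoris (X × X × ℝ))

namespace PMExt

open MeasureTheory Filter Topology

/-- The probability space: a countable power of the unit interval. -/
abbrev TT : Type := ℕ → unitInterval

/-- The product measure on `TT`. -/
def muT : Measure TT := Measure.infinitePi (fun _ : ℕ => (volume : Measure unitInterval))

instance : IsProbabilityMeasure muT := by unfold muT; infer_instance

theorem muT_update (k : ℕ) :
    Measure.map (fun z : unitInterval × TT => Function.update z.2 k z.1)
      ((volume : Measure unitInterval).prod muT) = muT := by
  have hm : Measurable (fun z : unitInterval × TT => Function.update z.2 k z.1) := by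
    rw [measurable_pi_iff]
    intro i
    by_cases h : i = k
    · subst h; simpa using measurable_fst
    · simp only [Function.update_of_ne h]
      exact (measurable_pi_apply i).comp measurable_snd
  unfold muT
  refine Measure.eq_infinitePi _ ?_
  intro s B hB
  have hBm : MeasurableSet (Set.pi (s : Set ℕ) B) :=
    MeasurableSet.pi s.countable_toSet (fun i hi => hB i)
  rw [Measure.map_apply hm hBm]
  by_cases hk : k ∈ s
  · have : (fun z : unitInterval × TT => Function.update z.2 k z.1) ⁻¹' (Set.pi (s : Set ℕ) B)
        = B k ×ˢ Set.pi ((s.erase k : Finset ℕ) : Set ℕ) B := by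
      ext ⟨a, t⟩
      simp only [Set.mem_preimage, Set.mem_pi, Set.mem_prod, Finset.mem_coe, Finset.mem_erase]
      constructor
      · intro h
        refine ⟨by simpa using h k hk, fun i hi => ?_⟩
        simpa [Function.update_of_ne hi.1] using h i hi.2
      · rintro ⟨h1, h2⟩ i hi
        by_cases hik : i = k
        · subst hik; simpa using h1
        · simpa [Function.update_of_ne hik] using h2 i ⟨hik, hi⟩
    rw [this, Measure.prod_prod, Measure.infinitePi_pi _ (fun i _ => hB i),
      Finset.mul_prod_erase s (fun i => volume (B i)) hk]
  · have : (fun z : unitInterval × TT => Function.update z.2 k z.1) ⁻¹' (Set.pi (s : Set ℕ) B)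
        = Set.univ ×ˢ Set.pi (s : Set ℕ) B := by
      ext ⟨a, t⟩
      simp only [Set.mem_preimage, Set.mem_pi, Set.mem_prod, Finset.mem_coe, Set.mem_univ,
        true_and]
      refine forall₂_congr fun i hi => ?_
      have : i ≠ k := fun h => hk (h ▸ hi)
      rw [Function.update_of_ne this]
    rw [this, Measure.prod_prod, Measure.infinitePi_pi _ (fun i _ => hB i)]
    simp

/-- A measurable set whose slices in direction `k` are subsingletons is null. -/
theorem muT_null_of_slices (k : ℕ) (N : Set TT) (hN : MeasurableSet N)
    (h : ∀ t : TT, {s : unitInterval | Function.update t k s ∈ N}.Subsingleton) :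
    muT N = 0 := by
  have hm : Measurable (fun z : unitInterval × TT => Function.update z.2 k z.1) := by
    rw [measurable_pi_iff]
    intro i
    by_cases h : i = k
    · subst h; simpa using measurable_fst
    · simp only [Function.update_of_ne h]
      exact (measurable_pi_apply i).comp measurable_snd
  rw [← muT_update k, Measure.map_apply hm hN, Measure.prod_apply_symm (hm hN)]
  rw [lintegral_eq_zero_of_ae_eq_zero]
  refine Filter.Eventually.of_forall fun t => ?_
  have := (h t)
  exact this.measure_zero _

section

variable {Y : Type*} [MetricSpace Y] [CompactSpace Y] [Nonempty Y]

/-- The random perturbation. -/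
def pert (t : TT) (a : Y) : ℝ := ∑' k, (1 / 2 : ℝ) ^ k * (t k : ℝ) * dist a (denseSeq Y k)

theorem pert_bound (k : ℕ) (t : TT) (a : Y) :
    ‖(1 / 2 : ℝ) ^ k * (t k : ℝ) * dist a (denseSeq Y k)‖
      ≤ (1 / 2 : ℝ) ^ k * Metric.diam (Set.univ : Set Y) := by
  rw [Real.norm_of_nonneg (mul_nonneg (mul_nonneg (by positivity) (t k).2.1) dist_nonneg)]
  have h1 : (t k : ℝ) ≤ 1 := (t k).2.2
  have h2 : dist a (denseSeq Y k) ≤ Metric.diam (Set.univ : Set Y) :=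
    Metric.dist_le_diam_of_mem isCompact_univ.isBounded (mem_univ _) (mem_univ _)
  have h3 : (1 / 2 : ℝ) ^ k * (t k : ℝ) ≤ (1 / 2 : ℝ) ^ k :=
    mul_le_of_le_one_right (by positivity) h1
  exact mul_le_mul h3 h2 dist_nonneg (by positivity)

theorem summable_bound :
    Summable fun k : ℕ => (1 / 2 : ℝ) ^ k * Metric.diam (Set.univ : Set Y) :=
  summable_geometric_two.mul_right _

theorem pert_summable (t : TT) (a : Y) :
    Summable fun k => (1 / 2 : ℝ) ^ k * (t k : ℝ) * dist a (denseSeq Y k) :=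
  Summable.of_norm_bounded summable_bound (fun k => pert_bound k t a)

theorem pert_nonneg (t : TT) (a : Y) : 0 ≤ pert t a :=
  tsum_nonneg fun k => mul_nonneg (mul_nonneg (by positivity) (t k).2.1) dist_nonneg

theorem continuous_pert : Continuous fun p : TT × Y => pert p.1 p.2 := by
  unfold pert
  refine continuous_tsum (fun k => ?_) summable_bound (fun k p => pert_bound k p.1 p.2)
  fun_prop

theorem pert_update (t : TT) (k : ℕ) (s s' : unitInterval) (a : Y) :
    pert (Function.update t k s) a - pert (Function.update t k s') a
      = ((s : ℝ) - s') * ((1 / 2 : ℝ) ^ k * dist a (denseSeq Y k)) := by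
  unfold pert
  rw [← (pert_summable _ a).tsum_sub (pert_summable _ a), tsum_eq_single k]
  · simp; ring
  · intro i hi
    simp [Function.update_of_ne hi]

/-- The random objective function. -/
def FF (t : TT) (x a : Y) : ℝ := dist x a * (1 + pert t a)

theorem continuous_FF : Continuous fun p : TT × Y × Y => FF p.1 p.2.1 p.2.2 := by
  unfold FF
  have : Continuous fun p : TT × Y × Y => pert p.1 p.2.2 :=
    continuous_pert.comp (continuous_fst.prodMk (continuous_snd.comp continuous_snd))
  fun_prop

theorem FF_self (t : TT) (x : Y) : FF t x x = 0 := by simp [FF]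

theorem FF_nonneg (t : TT) (x a : Y) : 0 ≤ FF t x a :=
  mul_nonneg dist_nonneg (by linarith [pert_nonneg t a])

theorem eq_of_FF_nonpos (t : TT) (x a : Y) (h : FF t x a ≤ 0) : x = a := by
  have h1 : 0 < 1 + pert t a := by linarith [pert_nonneg t a]
  have h2 : dist x a ≤ 0 := by
    by_contra hc
    push Not at hc
    have := mul_pos hc h1
    unfold FF at h
    linarith
  exact dist_le_zero.1 h2

/-- Slope of the objective in direction `k`. -/
def VV (k : ℕ) (x a : Y) : ℝ := dist x a * ((1 / 2 : ℝ) ^ k * dist a (denseSeq Y k))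

theorem FF_update (t : TT) (k : ℕ) (s s' : unitInterval) (x a : Y) :
    FF (Function.update t k s) x a - FF (Function.update t k s') x a
      = ((s : ℝ) - s') * VV k x a := by
  have := pert_update t k s s' a
  unfold FF VV
  linear_combination dist x a * this

/-- Being a minimizer. -/
def IsMz (A : Set Y) (t : TT) (x a : Y) : Prop := a ∈ A ∧ ∀ b ∈ A, FF t x a ≤ FF t x b

/-- Bad parameters. -/
def Bad (A : Set Y) (x : Y) (k : ℕ) (p q : ℝ) : Set TT :=
  {t | ∃ a b, IsMz A t x a ∧ IsMz A t x b ∧ VV k x a ≤ p ∧ q ≤ VV k x b}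

theorem isClosed_Bad {A : Set Y} (hA : IsClosed A) (x : Y) (k : ℕ) (p q : ℝ) :
    IsClosed (Bad A x k p q) := by
  have hV : Continuous fun a : Y => VV k x a := by unfold VV; fun_prop
  have hMz : IsClosed {z : TT × Y | IsMz A z.1 x z.2} := by
    have : {z : TT × Y | IsMz A z.1 x z.2} = (Prod.snd ⁻¹' A) ∩
        ⋂ b ∈ A, {z : TT × Y | FF z.1 x z.2 ≤ FF z.1 x b} := by
      ext z; simp [IsMz]
    rw [this]
    refine (hA.preimage continuous_snd).inter (isClosed_biInter fun b _ => ?_)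
    refine isClosed_le ?_ ?_
    · exact continuous_FF.comp (continuous_fst.prodMk (continuous_const.prodMk continuous_snd))
    · exact continuous_FF.comp (continuous_fst.prodMk (continuous_const.prodMk continuous_const))
  have hC : IsClosed {z : TT × Y × Y | IsMz A z.1 x z.2.1 ∧ IsMz A z.1 x z.2.2 ∧
      VV k x z.2.1 ≤ p ∧ q ≤ VV k x z.2.2} := by
    refine IsClosed.inter ?_ (IsClosed.inter ?_ (IsClosed.inter ?_ ?_))
    · exact hMz.preimage (f := fun z : TT × Y × Y => (z.1, z.2.1)) (by fun_prop)
    · exact hMz.preimage (f := fun z : TT × Y × Y => (z.1, z.2.2)) (by fun_prop)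
    · exact isClosed_le (hV.comp (by fun_prop)) continuous_const
    · exact isClosed_le continuous_const (hV.comp (by fun_prop))
  have : Bad A x k p q = Prod.fst '' {z : TT × Y × Y | IsMz A z.1 x z.2.1 ∧ IsMz A z.1 x z.2.2 ∧
      VV k x z.2.1 ≤ p ∧ q ≤ VV k x z.2.2} := by
    ext t
    constructor
    · rintro ⟨a, b, h⟩
      exact ⟨(t, a, b), h, rfl⟩
    · rintro ⟨⟨t', a, b⟩, h, rfl⟩
      exact ⟨a, b, h⟩
  rw [this]
  exact (hC.isCompact.image continuous_fst).isClosed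

theorem Bad_aux {A : Set Y} {x : Y} {k : ℕ} {p q : ℝ} (hpq : p < q) (t : TT)
    (s s' : unitInterval) (hlt : s < s') (h : Function.update t k s ∈ Bad A x k p q)
    (h' : Function.update t k s' ∈ Bad A x k p q) : False := by
  obtain ⟨a, _, ha, _, hap, _⟩ := h
  obtain ⟨_, b, _, hb, _, hbq⟩ := h'
  have h1 := ha.2 b hb.1
  have h2 := hb.2 a ha.1
  have e1 := FF_update t k s s' x a
  have e2 := FF_update t k s s' x b
  have hs : (s : ℝ) < s' := hlt
  nlinarith

theorem muT_Bad {A : Set Y} (hA : IsClosed A) (x : Y) (k : ℕ) {p q : ℝ} (hpq : p < q) :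
    muT (Bad A x k p q) = 0 := by
  refine muT_null_of_slices k _ (isClosed_Bad hA x k p q).measurableSet fun t s hs r hr => ?_
  rcases lt_trichotomy s r with h | h | h
  · exact (Bad_aux hpq t s r h hs hr).elim
  · exact h
  · exact (Bad_aux hpq t r s h hr hs).elim

/-- The exceptional null set. -/
def NN (A : Set Y) (x : Y) : Set TT :=
  ⋃ (k : ℕ), ⋃ (p : ℚ), ⋃ (q : ℚ), ⋃ (_ : p < q), Bad A x k p q

theorem measurableSet_NN {A : Set Y} (hA : IsClosed A) (x : Y) : MeasurableSet (NN A x) :=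
  MeasurableSet.iUnion fun k => MeasurableSet.iUnion fun p => MeasurableSet.iUnion fun q =>
    MeasurableSet.iUnion fun _ => (isClosed_Bad hA x k p q).measurableSet

theorem muT_NN {A : Set Y} (hA : IsClosed A) (x : Y) : muT (NN A x) = 0 := by
  unfold NN
  simp only [measure_iUnion_null_iff]
  intro k p q hpq
  exact muT_Bad hA x k (by exact_mod_cast hpq)

theorem VV_le_of_notMem {A : Set Y} {x : Y} {t : TT} (ht : t ∉ NN A x) {a b : Y}
    (ha : IsMz A t x a) (hb : IsMz A t x b) (k : ℕ) : VV k x b ≤ VV k x a := by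
  by_contra hc
  push Not at hc
  obtain ⟨p, hp1, hp2⟩ := exists_rat_btwn hc
  obtain ⟨q, hq1, hq2⟩ := exists_rat_btwn hp2
  apply ht
  simp only [NN, mem_iUnion]
  exact ⟨k, p, q, by exact_mod_cast hq1, a, b, ha, hb, hp1.le, hq2.le⟩

theorem unique_of_notMem {A : Set Y} {x : Y} {t : TT} (ht : t ∉ NN A x) {a b : Y}
    (ha : IsMz A t x a) (hb : IsMz A t x b) : a = b := by
  by_cases hx : x ∈ A
  · have h1 := ha.2 x hx
    have h2 := hb.2 x hx
    rw [FF_self] at h1 h2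
    rw [← eq_of_FF_nonpos t x a h1, ← eq_of_FF_nonpos t x b h2]
  · have hk : ∀ k, dist x a * dist a (denseSeq Y k) = dist x b * dist b (denseSeq Y k) := by
      intro k
      have h := le_antisymm (VV_le_of_notMem ht hb ha k) (VV_le_of_notMem ht ha hb k)
      unfold VV at h
      have h2 : (1 / 2 : ℝ) ^ k ≠ 0 := by positivity
      apply mul_left_cancel₀ h2
      linear_combination h
    have hz : (fun z : Y => dist x a * dist a z) = fun z => dist x b * dist b z := by
      refine (denseRange_denseSeq Y).equalizer (by fun_prop) (by fun_prop) ?_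
      funext k
      exact hk k
    have h3 := congrFun hz a
    simp only [dist_self, mul_zero] at h3
    rcases mul_eq_zero.1 h3.symm with h4 | h4
    · exact absurd (dist_eq_zero.1 h4 ▸ hb.1) hx
    · exact (dist_eq_zero.1 h4).symm

open Classical in
/-- The random retraction: a chosen minimizer. -/
def rr (A : Set Y) (t : TT) (x : Y) : Y := if h : ∃ a, IsMz A t x a then h.choose else x

theorem rr_spec {A : Set Y} (hA : IsClosed A) (hne : A.Nonempty) (t : TT) (x : Y) :
    IsMz A t x (rr A t x) := by
  have hc : Continuous fun a => FF t x a :=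
    continuous_FF.comp (continuous_const.prodMk (continuous_const.prodMk continuous_id))
  obtain ⟨a, ha, hmin⟩ := hA.isCompact.exists_isMinOn hne hc.continuousOn
  have h : ∃ a, IsMz A t x a := ⟨a, ha, fun b hb => hmin hb⟩
  unfold rr
  rw [dif_pos h]
  exact h.choose_spec

theorem rr_of_mem {A : Set Y} (hA : IsClosed A) (t : TT) {x : Y} (hx : x ∈ A) :
    rr A t x = x := by
  have h := (rr_spec hA ⟨x, hx⟩ t x).2 x hx
  rw [FF_self] at h
  exact (eq_of_FF_nonpos t x _ h).symm

end

section

variable {Y : Type*} [MetricSpace Y] [CompactSpace Y] [Nonempty Y]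

theorem isOpen_graph_subset {U : Set (Y × Y × ℝ)} (hU : IsOpen U) :
    IsOpen {ρ : PartialCPM Y | ρ.graph ⊆ U} := by
  refine ⟨{K | K ⊆ U}, ?_, rfl⟩
  exact TopologicalSpace.GenerateOpen.basic _ ⟨U, hU, Or.inl rfl⟩

theorem isOpen_graph_inter {U : Set (Y × Y × ℝ)} (hU : IsOpen U) :
    IsOpen {ρ : PartialCPM Y | (ρ.graph ∩ U).Nonempty} := by
  refine ⟨{K | (K ∩ U).Nonempty}, ?_, rfl⟩
  exact TopologicalSpace.GenerateOpen.basic _ ⟨U, hU, Or.inr rfl⟩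

theorem graph_compact (ρ : PartialCPM Y) : IsCompact ρ.graph := by
  have h : ρ.graph = (fun p : Y × Y => (p.1, p.2, ρ.d p.1 p.2)) '' (ρ.dom ×ˢ ρ.dom) := by
    ext ⟨a, b, s⟩
    simp only [PartialCPM.graph, mem_setOf_eq, mem_image, mem_prod, Prod.mk.injEq, Prod.exists]
    constructor
    · rintro ⟨h1, h2, rfl⟩
      exact ⟨a, b, ⟨h1, h2⟩, rfl, rfl, rfl⟩
    · rintro ⟨a', b', ⟨h1, h2⟩, rfl, rfl, rfl⟩
      exact ⟨h1, h2, rfl⟩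
  rw [h]
  refine (ρ.dom_closed.isCompact.prod ρ.dom_closed.isCompact).image_of_continuousOn ?_
  exact continuousOn_fst.prodMk (continuousOn_snd.prodMk ρ.cont)

theorem vietoris_eq (Z : Type*) [TopologicalSpace Z] :
    vietoris Z = TopologicalSpace.vietoris Z := by
  unfold vietoris TopologicalSpace.vietoris
  congr 1
  ext S
  simp only [mem_setOf_eq, mem_union, mem_image]
  constructor
  · rintro ⟨U, hU, rfl | rfl⟩
    · exact Or.inl ⟨U, hU, rfl⟩
    · exact Or.inr ⟨U, hU, rfl⟩
  · rintro (⟨U, hU, rfl⟩ | ⟨U, hU, rfl⟩)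
    · exact ⟨U, hU, Or.inl rfl⟩
    · exact ⟨U, hU, Or.inr rfl⟩

instance instSC : SecondCountableTopology (PartialCPM Y) := by
  let f : PartialCPM Y → Compacts (Y × Y × ℝ) := fun ρ => ⟨ρ.graph, graph_compact ρ⟩
  have h : IsInducing f := by
    constructor
    change TopologicalSpace.induced PartialCPM.graph (vietoris (Y × Y × ℝ)) =
      TopologicalSpace.induced f (TopologicalSpace.induced _ (TopologicalSpace.vietoris _))
    rw [induced_compose, vietoris_eq]
    rfl
  exact h.secondCountableTopology

theorem eventually_dom_subset (ρ₀ : PartialCPM Y) {V : Set Y} (hV : IsOpen V)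
    (h : ρ₀.dom ⊆ V) : ∀ᶠ ρ in 𝓝 ρ₀, ρ.dom ⊆ V := by
  have hU : IsOpen {p : Y × Y × ℝ | p.1 ∈ V} := hV.preimage continuous_fst
  filter_upwards [(isOpen_graph_subset hU).mem_nhds (fun p hp => h hp.1)] with ρ hρ a ha
  exact hρ (show (a, a, ρ.d a a) ∈ ρ.graph from ⟨ha, ha, rfl⟩)

theorem eventually_dom_hits (ρ₀ : PartialCPM Y) {V : Set Y} (hV : IsOpen V)
    {a : Y} (ha : a ∈ ρ₀.dom) (haV : a ∈ V) : ∀ᶠ ρ in 𝓝 ρ₀, ∃ b ∈ ρ.dom, b ∈ V := by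
  have hU : IsOpen {p : Y × Y × ℝ | p.1 ∈ V} := hV.preimage continuous_fst
  filter_upwards [(isOpen_graph_inter hU).mem_nhds
    ⟨(a, a, ρ₀.d a a), ⟨ha, ha, rfl⟩, haV⟩] with ρ hρ
  obtain ⟨p, hp, hpV⟩ := hρ
  exact ⟨p.1, hp.1, hpV⟩

theorem exists_bound (ρ : PartialCPM Y) :
    ∃ M, ∀ a ∈ ρ.dom, ∀ b ∈ ρ.dom, |ρ.d a b| < M := by
  obtain ⟨M, hM⟩ := (ρ.dom_closed.isCompact.prod
    ρ.dom_closed.isCompact).exists_bound_of_continuousOn ρ.cont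
  refine ⟨M + 1, fun a ha b hb => ?_⟩
  have := hM (a, b) ⟨ha, hb⟩
  simp only [Real.norm_eq_abs] at this
  linarith

theorem eventually_bound (ρ₀ : PartialCPM Y) :
    ∃ M, ∀ᶠ ρ in 𝓝 ρ₀, ∀ a ∈ ρ.dom, ∀ b ∈ ρ.dom, |ρ.d a b| < M := by
  obtain ⟨M, hM⟩ := exists_bound ρ₀
  refine ⟨M, ?_⟩
  have hU : IsOpen {p : Y × Y × ℝ | |p.2.2| < M} :=
    isOpen_lt (by fun_prop) continuous_const
  filter_upwards [(isOpen_graph_subset hU).mem_nhds (fun p hp => by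
    rw [mem_setOf_eq, hp.2.2]; exact hM _ hp.1 _ hp.2.1)] with ρ hρ a ha b hb
  exact hρ (show (a, b, ρ.d a b) ∈ ρ.graph from ⟨ha, hb, rfl⟩)

theorem tendsto_value {ι : Type*} {l : Filter ι} {ρ₀ : PartialCPM Y} {ρ : ι → PartialCPM Y}
    (hρ : Tendsto ρ l (𝓝 ρ₀)) {a b : ι → Y} {a₀ b₀ : Y} (ha : Tendsto a l (𝓝 a₀))
    (hb : Tendsto b l (𝓝 b₀)) (ha₀ : a₀ ∈ ρ₀.dom) (hb₀ : b₀ ∈ ρ₀.dom)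
    (had : ∀ i, a i ∈ (ρ i).dom) (hbd : ∀ i, b i ∈ (ρ i).dom) :
    Tendsto (fun i => (ρ i).d (a i) (b i)) l (𝓝 (ρ₀.d a₀ b₀)) := by
  rw [Metric.tendsto_nhds]
  intro ε hε
  have hc := Metric.continuousWithinAt_iff.1 (ρ₀.cont (a₀, b₀) ⟨ha₀, hb₀⟩) ε hε
  obtain ⟨δ, hδ, hδ2⟩ := hc
  let C : Set (Y × Y × ℝ) := {p | dist (p.1, p.2.1) (a₀, b₀) ≤ δ / 2 ∧ ε ≤ dist p.2.2 (ρ₀.d a₀ b₀)}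
  have hC : IsClosed C := by
    have h1 : IsClosed {p : Y × Y × ℝ | dist (p.1, p.2.1) (a₀, b₀) ≤ δ / 2} :=
      isClosed_le (by fun_prop) continuous_const
    have h2 : IsClosed {p : Y × Y × ℝ | ε ≤ dist p.2.2 (ρ₀.d a₀ b₀)} :=
      isClosed_le continuous_const (by fun_prop)
    exact h1.inter h2
  have hsub : ρ₀.graph ⊆ Cᶜ := by
    rintro ⟨x, y, s⟩ ⟨hx, hy, hs⟩ ⟨h1, h2⟩
    simp only at hx hy hs h1 h2
    have := hδ2 (x := (x, y)) ⟨hx, hy⟩ (by linarith)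
    rw [hs] at h2
    simp only at this
    linarith
  have hab : Tendsto (fun i => (a i, b i)) l (𝓝 (a₀, b₀)) := ha.prodMk_nhds hb
  filter_upwards [hρ.eventually ((isOpen_graph_subset hC.isOpen_compl).mem_nhds hsub),
    Metric.tendsto_nhds.1 hab (δ / 2) (by positivity)] with i hi1 hi2
  by_contra hcon
  push Not at hcon
  exact hi1 (show (a i, b i, (ρ i).d (a i) (b i)) ∈ (ρ i).graph from ⟨had i, hbd i, rfl⟩)
    ⟨hi2.le, hcon⟩

theorem tendsto_rr {ι : Type*} {l : Filter ι} {ρ₀ : PartialCPM Y} {ρ : ι → PartialCPM Y}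
    (hρ : Tendsto ρ l (𝓝 ρ₀)) {t : ι → TT} {t₀ : TT} (ht : Tendsto t l (𝓝 t₀))
    {x : ι → Y} {x₀ : Y} (hx : Tendsto x l (𝓝 x₀)) (hN : t₀ ∉ NN ρ₀.dom x₀) :
    Tendsto (fun i => rr (ρ i).dom (t i) (x i)) l (𝓝 (rr ρ₀.dom t₀ x₀)) := by
  rw [tendsto_iff_ultrafilter]
  intro g hg
  obtain ⟨b, -, hb⟩ := isCompact_univ.ultrafilter_le_nhds
    (g.map fun i => rr (ρ i).dom (t i) (x i)) (by simp)
  have hb : Tendsto (fun i => rr (ρ i).dom (t i) (x i)) g (𝓝 b) := hb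
  have hρg := hρ.mono_left hg
  have htg := ht.mono_left hg
  have hxg := hx.mono_left hg
  have hspec := fun i => rr_spec (ρ i).dom_closed (ρ i).dom_ne (t i) (x i)
  have hbd : b ∈ ρ₀.dom := by
    by_contra hbn
    obtain ⟨V, W, hV, hW, hVs, hbW, hdisj⟩ :=
      SeparatedNhds.of_isCompact_isCompact ρ₀.dom_closed.isCompact (isCompact_singleton (x := b))
        (Set.disjoint_singleton_right.2 hbn)
    have h1 := hρg.eventually (eventually_dom_subset ρ₀ hV hVs)
    have h2 := hb.eventually (hW.mem_nhds (hbW rfl))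
    obtain ⟨i, hi1, hi2⟩ := (h1.and h2).exists
    exact Set.disjoint_left.1 hdisj (hi1 (hspec i).1) hi2
  have hFb : Tendsto (fun i => FF (t i) (x i) (rr (ρ i).dom (t i) (x i))) g (𝓝 (FF t₀ x₀ b)) :=
    (continuous_FF.tendsto (t₀, x₀, b)).comp (htg.prodMk_nhds (hxg.prodMk_nhds hb))
  have hmin : IsMz ρ₀.dom t₀ x₀ b := by
    refine ⟨hbd, fun a ha => ?_⟩
    refine le_of_forall_gt_imp_ge_of_dense fun c hc => ?_
    have hO : {p : TT × Y × Y | FF p.1 p.2.1 p.2.2 < c} ∈ 𝓝 (t₀, x₀, a) :=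
      (isOpen_lt continuous_FF continuous_const).mem_nhds hc
    rw [nhds_prod_eq, nhds_prod_eq, mem_prod_iff] at hO
    obtain ⟨S, hS, S', hS', hSS⟩ := hO
    rw [mem_prod_iff] at hS'
    obtain ⟨P, hP, Q, hQ, hPQ⟩ := hS'
    obtain ⟨Q', hQ', hQo, haQ⟩ := mem_nhds_iff.1 hQ
    refine le_of_tendsto hFb ?_
    filter_upwards [htg hS, hxg hP, hρg.eventually (eventually_dom_hits ρ₀ hQo ha haQ)]
      with i h1 h2 h3
    obtain ⟨a', ha', haQ'⟩ := h3
    have h4 : FF (t i) (x i) a' < c := hSS (show (t i, x i, a') ∈ S ×ˢ S' from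
      ⟨h1, hPQ ⟨h2, hQ' haQ'⟩⟩)
    exact ((hspec i).2 a' ha').trans h4.le
  rw [unique_of_notMem hN (rr_spec ρ₀.dom_closed ρ₀.dom_ne t₀ x₀) hmin]
  exact hb

/-- The integrand. -/
def GG (ρ : PartialCPM Y) (x y : Y) (t : TT) : ℝ := ρ.d (rr ρ.dom t x) (rr ρ.dom t y)

theorem tendsto_GG {ι : Type*} {l : Filter ι} {ρ₀ : PartialCPM Y} {ρ : ι → PartialCPM Y}
    (hρ : Tendsto ρ l (𝓝 ρ₀)) {t : ι → TT} {t₀ : TT} (ht : Tendsto t l (𝓝 t₀))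
    {x y : ι → Y} {x₀ y₀ : Y} (hx : Tendsto x l (𝓝 x₀)) (hy : Tendsto y l (𝓝 y₀))
    (hNx : t₀ ∉ NN ρ₀.dom x₀) (hNy : t₀ ∉ NN ρ₀.dom y₀) :
    Tendsto (fun i => GG (ρ i) (x i) (y i) (t i)) l (𝓝 (GG ρ₀ x₀ y₀ t₀)) :=
  tendsto_value hρ (tendsto_rr hρ ht hx hNx) (tendsto_rr hρ ht hy hNy)
    (rr_spec ρ₀.dom_closed ρ₀.dom_ne t₀ x₀).1 (rr_spec ρ₀.dom_closed ρ₀.dom_ne t₀ y₀).1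
    (fun i => (rr_spec (ρ i).dom_closed (ρ i).dom_ne (t i) (x i)).1)
    (fun i => (rr_spec (ρ i).dom_closed (ρ i).dom_ne (t i) (y i)).1)

theorem ae_notMem (ρ : PartialCPM Y) (x y : Y) :
    ∀ᵐ t ∂muT, t ∉ NN ρ.dom x ∧ t ∉ NN ρ.dom y := by
  have h1 := muT_NN ρ.dom_closed x
  have h2 := muT_NN ρ.dom_closed y
  exact (measure_eq_zero_iff_ae_notMem.1 h1).and (measure_eq_zero_iff_ae_notMem.1 h2)

theorem aesm_GG (ρ : PartialCPM Y) (x y : Y) : AEStronglyMeasurable (GG ρ x y) muT := by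
  let S : Set TT := (NN ρ.dom x ∪ NN ρ.dom y)ᶜ
  have hS : MeasurableSet S :=
    ((measurableSet_NN ρ.dom_closed x).union (measurableSet_NN ρ.dom_closed y)).compl
  have hc : ContinuousOn (GG ρ x y) S := by
    intro t ht
    have h1 : t ∉ NN ρ.dom x := fun h => ht (Or.inl h)
    have h2 : t ∉ NN ρ.dom y := fun h => ht (Or.inr h)
    have h : ContinuousAt (GG ρ x y) t :=
      tendsto_GG (l := 𝓝 t) (ρ := fun _ => ρ) (t := fun t => t) (x := fun _ => x)
        (y := fun _ => y) tendsto_const_nhds tendsto_id tendsto_const_nhds tendsto_const_nhds h1 h2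
    exact h.continuousWithinAt
  have h := hc.aestronglyMeasurable (μ := muT) hS
  rwa [Measure.restrict_eq_self_of_ae_mem] at h
  filter_upwards [ae_notMem ρ x y] with t ht
  rintro (h | h)
  · exact ht.1 h
  · exact ht.2 h

theorem rr_mem (ρ : PartialCPM Y) (t : TT) (x : Y) : rr ρ.dom t x ∈ ρ.dom :=
  (rr_spec ρ.dom_closed ρ.dom_ne t x).1

theorem integrable_GG (ρ : PartialCPM Y) (x y : Y) : Integrable (GG ρ x y) muT := by
  obtain ⟨M, hM⟩ := exists_bound ρ
  refine Integrable.of_bound (aesm_GG ρ x y) M (Eventually.of_forall fun t => ?_)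
  exact (hM _ (rr_mem ρ t x) _ (rr_mem ρ t y)).le

/-- The extension, as a function. -/
def UU (ρ : PartialCPM Y) (x y : Y) : ℝ := ∫ t, GG ρ x y t ∂muT

theorem continuous_UU : Continuous fun p : PartialCPM Y × Y × Y => UU p.1 p.2.1 p.2.2 := by
  rw [continuous_iff_continuousAt]
  rintro ⟨ρ₀, x₀, y₀⟩
  obtain ⟨M, hM⟩ := eventually_bound ρ₀
  have hfst : Tendsto (fun p : PartialCPM Y × Y × Y => p.1) (𝓝 (ρ₀, x₀, y₀)) (𝓝 ρ₀) :=
    continuous_fst.tendsto _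
  have hx : Tendsto (fun p : PartialCPM Y × Y × Y => p.2.1) (𝓝 (ρ₀, x₀, y₀)) (𝓝 x₀) :=
    (continuous_fst.comp continuous_snd).tendsto _
  have hy : Tendsto (fun p : PartialCPM Y × Y × Y => p.2.2) (𝓝 (ρ₀, x₀, y₀)) (𝓝 y₀) :=
    (continuous_snd.comp continuous_snd).tendsto _
  refine tendsto_integral_filter_of_dominated_convergence (fun _ => M) ?_ ?_ ?_ ?_
  · exact Eventually.of_forall fun p => aesm_GG _ _ _
  · filter_upwards [hfst.eventually hM] with p hp
    exact Eventually.of_forall fun t => (hp _ (rr_mem _ _ _) _ (rr_mem _ _ _)).le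
  · exact integrable_const _
  · filter_upwards [ae_notMem ρ₀ x₀ y₀] with t ht
    exact tendsto_GG hfst tendsto_const_nhds hx hy ht.1 ht.2

/-- The extension operator. -/
def uu (ρ : PartialCPM Y) : CPM Y where
  d := UU ρ
  refl x := by
    unfold UU GG
    simp [ρ.refl _ (rr_mem ρ _ x)]
  symm x y := by
    unfold UU GG
    congr 1
    funext t
    exact ρ.symm _ (rr_mem ρ t x) _ (rr_mem ρ t y)
  triangle x y z := by
    unfold UU
    rw [← integral_add (integrable_GG ρ x y) (integrable_GG ρ y z)]
    refine integral_mono (integrable_GG ρ x z)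
      ((integrable_GG ρ x y).add (integrable_GG ρ y z)) fun t => ?_
    exact ρ.triangle _ (rr_mem ρ t x) _ (rr_mem ρ t y) _ (rr_mem ρ t z)
  cont := continuous_UU.comp (continuous_const.prodMk continuous_id)

theorem uu_ext (ρ : PartialCPM Y) (x y : Y) (hx : x ∈ ρ.dom) (hy : y ∈ ρ.dom) :
    (uu ρ).d x y = ρ.d x y := by
  change ∫ t, GG ρ x y t ∂muT = _
  unfold GG
  simp [rr_of_mem ρ.dom_closed _ hx, rr_of_mem ρ.dom_closed _ hy]

theorem continuous_uu : Continuous (uu : PartialCPM Y → CPM Y) := by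
  rw [continuous_induced_rng]
  unfold vietoris
  rw [continuous_generateFrom_iff]
  have hc : Continuous fun p : PartialCPM Y × (Y × Y) => (p.2.1, p.2.2, UU p.1 p.2.1 p.2.2) :=
    (continuous_fst.comp continuous_snd).prodMk
      ((continuous_snd.comp continuous_snd).prodMk continuous_UU)
  rintro S ⟨U, hU, rfl | rfl⟩
  · rw [isOpen_iff_mem_nhds]
    intro ρ₀ h₀
    have h₀ : (uu ρ₀).graph ⊆ U := h₀
    have hev : ∀ᶠ ρ in 𝓝 ρ₀, ∀ z ∈ (univ : Set (Y × Y)), (z.1, z.2, UU ρ z.1 z.2) ∈ U := by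
      refine isCompact_univ.eventually_forall_of_forall_eventually fun z _ => ?_
      exact hc.continuousAt.eventually (hU.mem_nhds (h₀ rfl))
    filter_upwards [hev] with ρ hρ
    rintro ⟨x, y, s⟩ hs
    have hs : s = UU ρ x y := hs
    rw [hs]
    exact hρ (x, y) (mem_univ _)
  · have : (CPM.graph ∘ (uu : PartialCPM Y → CPM Y)) ⁻¹' {K | (K ∩ U).Nonempty} =
        ⋃ z : Y × Y, {ρ | (z.1, z.2, UU ρ z.1 z.2) ∈ U} := by
      ext ρ
      simp only [mem_preimage, Function.comp_apply, mem_setOf_eq, mem_iUnion]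
      constructor
      · rintro ⟨⟨x, y, s⟩, hs, hm⟩
        have hs : s = UU ρ x y := hs
        exact ⟨(x, y), hs ▸ hm⟩
      · rintro ⟨z, hz⟩
        exact ⟨_, rfl, hz⟩
    rw [this]
    refine isOpen_iUnion fun z => ?_
    exact hU.preimage (hc.comp (continuous_id.prodMk continuous_const))

theorem main (Y : Type*) [MetricSpace Y] [CompactSpace Y] [Nonempty Y] :
    ∃ u : PartialCPM Y → CPM Y,
      (∀ (ρ : PartialCPM Y) (x y : Y), x ∈ ρ.dom → y ∈ ρ.dom →
        (u ρ).d x y = ρ.d x y) ∧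
      (∀ c : ℝ, 0 ≤ c → ∀ ρ σ : PartialCPM Y, σ.dom = ρ.dom →
        (∀ a ∈ ρ.dom, ∀ b ∈ ρ.dom, σ.d a b = c * ρ.d a b) →
        ∀ x y : Y, (u σ).d x y = c * (u ρ).d x y) ∧
      (∀ ρ σ τ : PartialCPM Y, σ.dom = ρ.dom → τ.dom = ρ.dom →
        (∀ a ∈ ρ.dom, ∀ b ∈ ρ.dom, τ.d a b = ρ.d a b + σ.d a b) →
        ∀ x y : Y, (u τ).d x y = (u ρ).d x y + (u σ).d x y) ∧
      (∀ ρ : PartialCPM Y,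
        (⨆ p : Y × Y, (u ρ).d p.1 p.2) = ⨆ p : ρ.dom × ρ.dom, ρ.d p.1 p.2) ∧
      Continuous u := by
  refine ⟨uu, uu_ext, ?_, ?_, ?_, continuous_uu⟩
  · intro c _ ρ σ hd h x y
    change ∫ t, GG σ x y t ∂muT = c * ∫ t, GG ρ x y t ∂muT
    rw [← integral_const_mul]
    congr 1
    funext t
    unfold GG
    rw [hd]
    exact h _ (rr_mem ρ t x) _ (rr_mem ρ t y)
  · intro ρ σ τ hσ hτ h x y
    change ∫ t, GG τ x y t ∂muT = ∫ t, GG ρ x y t ∂muT + ∫ t, GG σ x y t ∂muT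
    rw [← integral_add (integrable_GG ρ x y) (integrable_GG σ x y)]
    congr 1
    funext t
    unfold GG
    rw [hσ, hτ]
    exact h _ (rr_mem ρ t x) _ (rr_mem ρ t y)
  · intro ρ
    obtain ⟨M, hM⟩ := exists_bound ρ
    have hbdd : BddAbove (range fun p : ρ.dom × ρ.dom => ρ.d p.1 p.2) := by
      refine ⟨M, ?_⟩
      rintro _ ⟨p, rfl⟩
      exact (le_abs_self _).trans (hM _ p.1.2 _ p.2.2).le
    have hle : ∀ p : Y × Y, (uu ρ).d p.1 p.2 ≤ ⨆ p : ρ.dom × ρ.dom, ρ.d p.1 p.2 := by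
      intro p
      have h : ∫ t, GG ρ p.1 p.2 t ∂muT ≤
          ∫ _, (⨆ p : ρ.dom × ρ.dom, ρ.d p.1 p.2) ∂muT := by
        refine integral_mono (integrable_GG ρ _ _) (integrable_const _) fun t => ?_
        exact le_ciSup hbdd (⟨_, rr_mem ρ t p.1⟩, ⟨_, rr_mem ρ t p.2⟩)
      rw [integral_const, probReal_univ, one_smul] at h
      exact h
    have : Nonempty ρ.dom := ρ.dom_ne.to_subtype
    refine le_antisymm (ciSup_le hle) (ciSup_le fun p => ?_)
    rw [← uu_ext ρ p.1 p.2 p.1.2 p.2.2]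
    exact le_ciSup (f := fun p : Y × Y => (uu ρ).d p.1 p.2) ⟨_, by rintro _ ⟨q, rfl⟩; exact hle q⟩
      ((p.1 : Y), (p.2 : Y))

end

end PMExt

theorem stmt_6
    (X : Type*) [TopologicalSpace X] [CompactSpace X] [T2Space X]
    [MetrizableSpace X] [Nontrivial X] :
    ∃ u : PartialCPM X → CPM X,
      -- (i) u is an extension operator
      (∀ (ρ : PartialCPM X) (x y : X), x ∈ ρ.dom → y ∈ ρ.dom →
        (u ρ).d x y = ρ.d x y) ∧
      -- (ii) u is linear: positively homogeneous ...
      (∀ c : ℝ, 0 ≤ c → ∀ ρ σ : PartialCPM X, σ.dom = ρ.dom →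
        (∀ a ∈ ρ.dom, ∀ b ∈ ρ.dom, σ.d a b = c * ρ.d a b) →
        ∀ x y : X, (u σ).d x y = c * (u ρ).d x y) ∧
      -- ... and additive on pairs with equal domains
      (∀ ρ σ τ : PartialCPM X, σ.dom = ρ.dom → τ.dom = ρ.dom →
        (∀ a ∈ ρ.dom, ∀ b ∈ ρ.dom, τ.d a b = ρ.d a b + σ.d a b) →
        ∀ x y : X, (u τ).d x y = (u ρ).d x y + (u σ).d x y) ∧
      -- (iii) u is regular
      (∀ ρ : PartialCPM X,
        (⨆ p : X × X, (u ρ).d p.1 p.2) = ⨆ p : ρ.dom × ρ.dom, ρ.d p.1 p.2) ∧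
      -- (iv) u is continuous
      Continuous u := by
  letI : MetricSpace X := metrizableSpaceMetric X
  exact PMExt.main X

end
end

section
/- Let X be a compact metrizable space and let M̃ = ⋃{M(A) : A ∈ exp X, |A| ≥ 2} be the set of continuous metrics defined on closed subsets of X having at least two points. There exists a regular extension operator ũ : PM → PM(X) such that ũ(M̃) ⊆ M(X); that is, ũ(ρ) restricted to dom ρ × dom ρ equals ρ and sup_{x,y ∈ X} ũ(ρ)(x,y) = sup_{x,y ∈ dom ρ} ρ(x,y) for every ρ ∈ PM, and ũ(ρ) is a continuous metric on X whenever ρ is a continuous metric on a closed subset of X with at least two points. -/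
/- STATEMENT 7: Let X be a compact metrizable space and M̃ the set of continuous
   metrics defined on closed subsets of X with at least two points.  There
   exists a regular extension operator ũ : PM → PM(X) with ũ(M̃) ⊆ M(X):
   ũ(ρ) extends ρ, sup ũ(ρ) = sup ρ, and ũ(ρ) is a metric on X whenever ρ is a
   metric on a closed subset of X with at least two points. -/

open TopologicalSpace Set

noncomputable section

/-- A subadditive modulus: a continuous metric-like majorant of `ρ`. -/
theorem exists_majorant {X : Type*} [MetricSpace X] [CompactSpace X] (ρ : PartialCPM X) (D : ℝ)
    (hD0 : 0 ≤ D) (hD : ∀ a ∈ ρ.dom, ∀ b ∈ ρ.dom, ρ.d a b ≤ D) :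
    ∃ e : X → X → ℝ, (∀ x, e x x = 0) ∧ (∀ x y, e x y = e y x) ∧
      (∀ x y z, e x z ≤ e x y + e y z) ∧ (∀ x y, dist x y ≤ e x y) ∧
      (∀ a ∈ ρ.dom, ∀ b ∈ ρ.dom, ρ.d a b ≤ e a b) ∧
      (∀ ε > 0, ∃ η > 0, ∀ x y, dist x y < η → e x y < ε) := by
  have hK : ∀ ε : {e : ℝ // 0 < e}, ∃ K : ℝ, 0 ≤ K ∧ ∀ a ∈ ρ.dom, ∀ b ∈ ρ.dom,
      ρ.d a b ≤ ε + K * dist a b := by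
    rintro ⟨ε, hε⟩
    have hu := (ρ.dom_closed.isCompact.prod ρ.dom_closed.isCompact).uniformContinuousOn_of_continuous
      ρ.cont
    rw [Metric.uniformContinuousOn_iff] at hu
    obtain ⟨η, hη, h⟩ := hu ε hε
    refine ⟨D / η, by positivity, fun a ha b hb => ?_⟩
    by_cases hab : dist a b < η
    · have h1 := h (a, b) ⟨ha, hb⟩ (a, a) ⟨ha, ha⟩ (by
        rw [Prod.dist_eq]; simp [dist_comm b a, hab, hη])
      simp only [ρ.refl a ha, Real.dist_eq, sub_zero] at h1
      have h2 : 0 ≤ D / η * dist a b := by positivity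
      have := le_abs_self (ρ.d a b)
      simp only
      linarith
    · have h2 : D ≤ D / η * dist a b := by
        rw [div_mul_eq_mul_div, le_div_iff₀ hη]
        exact mul_le_mul_of_nonneg_left (not_lt.1 hab) hD0
      have := hD a ha b hb
      simp only
      linarith
  choose K hK0 hK using hK
  haveI : Nonempty {e : ℝ // 0 < e} := ⟨⟨1, one_pos⟩⟩
  let w : ℝ → ℝ := fun t => ⨅ ε : {e : ℝ // 0 < e}, ((ε : ℝ) + K ε * t)
  have hbdd : ∀ t, 0 ≤ t → BddBelow (range fun ε : {e : ℝ // 0 < e} => ((ε : ℝ) + K ε * t)) := by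
    intro t ht
    refine ⟨0, ?_⟩
    rintro _ ⟨ε, rfl⟩
    have := hK0 ε
    have := ε.2
    simp only
    positivity
  have w_le : ∀ t, 0 ≤ t → ∀ ε : {e : ℝ // 0 < e}, w t ≤ ε + K ε * t := fun t ht ε =>
    ciInf_le (hbdd t ht) ε
  have le_w : ∀ t c, (∀ ε : {e : ℝ // 0 < e}, c ≤ ε + K ε * t) → c ≤ w t := fun t c h => le_ciInf h
  have w_nonneg : ∀ t, 0 ≤ t → 0 ≤ w t := by
    intro t ht
    refine le_w _ _ fun ε => ?_
    have := hK0 ε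
    have := ε.2
    positivity
  have w_zero : w 0 = 0 := by
    refine le_antisymm (le_of_forall_pos_le_add fun ε hε => ?_) (w_nonneg 0 le_rfl)
    have := w_le 0 le_rfl ⟨ε, hε⟩
    simpa using this
  have w_sub : ∀ r s t, 0 ≤ r → 0 ≤ s → 0 ≤ t → r ≤ s + t → w r ≤ w s + w t := by
    intro r s t hr hs ht h
    have key : ∀ ε ε' : {e : ℝ // 0 < e}, w r ≤ (ε + K ε * s) + (ε' + K ε' * t) := by
      intro ε ε'
      have h1 := ε.2
      have h2 := ε'.2
      rcases le_total (K ε) (K ε') with hh | hh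
      · have := w_le r hr ε
        have := mul_le_mul_of_nonneg_left h (hK0 ε)
        have := mul_le_mul_of_nonneg_right hh ht
        linarith
      · have := w_le r hr ε'
        have := mul_le_mul_of_nonneg_left h (hK0 ε')
        have := mul_le_mul_of_nonneg_right hh hs
        linarith
    have : w r - w t ≤ w s := le_w _ _ fun ε => by
      have : w r - (ε + K ε * s) ≤ w t := le_w _ _ fun ε' => by
        have := key ε ε'
        linarith
      linarith
    linarith
  refine ⟨fun x y => dist x y + w (dist x y), ?_, ?_, ?_, ?_, ?_, ?_⟩
  · intro x; simp [w_zero]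
  · intro x y; simp only [dist_comm]
  · intro x y z
    have := dist_triangle x y z
    have := w_sub _ _ _ dist_nonneg dist_nonneg dist_nonneg (dist_triangle x y z)
    simp only
    linarith
  · intro x y
    have := w_nonneg (dist x y) dist_nonneg
    simp only
    linarith
  · intro a ha b hb
    have : ρ.d a b ≤ w (dist a b) := le_w _ _ fun ε => hK ε a ha b hb
    have : 0 ≤ dist a b := dist_nonneg
    simp only
    linarith
  · intro ε hε
    have hK' := hK0 ⟨ε / 2, half_pos hε⟩
    refine ⟨ε / 2 / (1 + K ⟨ε / 2, half_pos hε⟩), by positivity, fun x y h => ?_⟩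
    have h1 := w_le (dist x y) dist_nonneg ⟨ε / 2, half_pos hε⟩
    rw [lt_div_iff₀ (by positivity)] at h
    simp only at h1 ⊢
    linarith

/-- A pseudometric dominated by a small majorant is continuous. -/
theorem cont_of_small {X : Type*} [MetricSpace X] (d : X → X → ℝ)
    (hs : ∀ x y, d x y = d y x) (ht : ∀ x y z, d x z ≤ d x y + d y z)
    (h : ∀ ε > 0, ∃ η > 0, ∀ x y, dist x y < η → d x y < ε) :
    Continuous fun p : X × X => d p.1 p.2 := by
  rw [Metric.continuous_iff]
  rintro ⟨x, y⟩ ε hε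
  obtain ⟨η, hη, h⟩ := h (ε / 2) (half_pos hε)
  refine ⟨η, hη, ?_⟩
  rintro ⟨x', y'⟩ hp
  rw [Prod.dist_eq, max_lt_iff] at hp
  have h1 := h _ _ hp.1
  have h2 := h _ _ hp.2
  simp only at h1 h2
  rw [Real.dist_eq, abs_lt]
  have t1 := ht x' x y'
  have t2 := ht x y y'
  have t3 := ht x x' y
  have t4 := ht x' y' y
  have := hs x x'
  have := hs y y'
  simp only
  constructor <;> linarith

theorem exists_extension {X : Type*} [MetricSpace X] [CompactSpace X] (ρ : PartialCPM X) :
    ∃ u : CPM X, (∀ x y : X, x ∈ ρ.dom → y ∈ ρ.dom → u.d x y = ρ.d x y) ∧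
      ((⨆ p : X × X, u.d p.1 p.2) = ⨆ p : ρ.dom × ρ.dom, ρ.d p.1 p.2) ∧
      (ρ.dom.Nontrivial → (∀ x ∈ ρ.dom, ∀ y ∈ ρ.dom, x ≠ y → ρ.d x y ≠ 0) →
        ∀ x y : X, x ≠ y → u.d x y ≠ 0) := by
  have hcomp := ρ.dom_closed.isCompact.prod ρ.dom_closed.isCompact
  have hne : (ρ.dom ×ˢ ρ.dom).Nonempty := ρ.dom_ne.prod ρ.dom_ne
  obtain ⟨⟨a₀, b₀⟩, ⟨ha₀, hb₀⟩, hmax⟩ := hcomp.exists_isMaxOn hne ρ.cont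
  simp only at ha₀ hb₀
  have hD : ∀ a ∈ ρ.dom, ∀ b ∈ ρ.dom, ρ.d a b ≤ ρ.d a₀ b₀ := fun a ha b hb =>
    hmax (show (a, b) ∈ ρ.dom ×ˢ ρ.dom from ⟨ha, hb⟩)
  have hpos : ∀ a ∈ ρ.dom, ∀ b ∈ ρ.dom, 0 ≤ ρ.d a b := fun a ha b hb => by
    have := ρ.triangle a ha b hb a ha
    rw [ρ.refl a ha, ρ.symm b hb a ha] at this
    linarith
  have hD0 := hpos a₀ ha₀ b₀ hb₀
  obtain ⟨e, e0, es, et, ed, eρ, ec⟩ := exists_majorant ρ _ hD0 hD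
  set D := ρ.d a₀ b₀ with hDdef
  have econt := cont_of_small e es et ec
  have epos : ∀ x y, 0 ≤ e x y := fun x y => dist_nonneg.trans (ed x y)
  have hmin : ∀ x y, ∃ a ∈ ρ.dom, ∃ b ∈ ρ.dom, ∀ a' ∈ ρ.dom, ∀ b' ∈ ρ.dom,
      e x a + ρ.d a b + e b y ≤ e x a' + ρ.d a' b' + e b' y := by
    intro x y
    have hc : ContinuousOn (fun p : X × X => e x p.1 + ρ.d p.1 p.2 + e p.2 y)
        (ρ.dom ×ˢ ρ.dom) := by
      refine ((Continuous.continuousOn ?_).add ρ.cont).add (Continuous.continuousOn ?_)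
      · exact econt.comp (continuous_const.prodMk continuous_fst)
      · exact econt.comp (continuous_snd.prodMk continuous_const)
    obtain ⟨⟨a, b⟩, ⟨ha, hb⟩, h⟩ := hcomp.exists_isMinOn hne hc
    exact ⟨a, ha, b, hb, fun a' ha' b' hb' =>
      h (show (a', b') ∈ ρ.dom ×ˢ ρ.dom from ⟨ha', hb'⟩)⟩
  choose α hα β hβ hmin using hmin
  obtain ⟨g, hg⟩ : ∃ g : X → X → ℝ, ∀ x y, g x y =
      e x (α x y) + ρ.d (α x y) (β x y) + e (β x y) y := ⟨_, fun _ _ => rfl⟩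
  have g_le : ∀ x y, ∀ a ∈ ρ.dom, ∀ b ∈ ρ.dom, g x y ≤ e x a + ρ.d a b + e b y := by
    intro x y a ha b hb
    rw [hg]; exact hmin x y a ha b hb
  have gpos : ∀ x y, 0 ≤ g x y := by
    intro x y
    have := hpos _ (hα x y) _ (hβ x y)
    have := epos x (α x y)
    have := epos (β x y) y
    rw [hg]; linarith
  have gs' : ∀ x y, g x y ≤ g y x := by
    intro x y
    have h := g_le x y _ (hβ y x) _ (hα y x)
    rw [hg y x, ρ.symm _ (hα y x) _ (hβ y x), es y, es _ x]
    linarith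
  have gs : ∀ x y, g x y = g y x := fun x y => le_antisymm (gs' x y) (gs' y x)
  have g1 : ∀ x y z, g x z ≤ e x y + g y z := by
    intro x y z
    have h := g_le x z _ (hα y z) _ (hβ y z)
    have := et x y (α y z)
    rw [hg y z]; linarith
  have g2 : ∀ x y z, g x z ≤ g x y + e y z := by
    intro x y z
    have := g1 z y x
    rw [gs x z, gs x y, es y z]; linarith
  have g3 : ∀ x y z, g x z ≤ g x y + g y z := by
    intro x y z
    have h := g_le x z _ (hα x y) _ (hβ y z)
    have h1 := ρ.triangle _ (hα x y) _ (hβ x y) _ (hβ y z)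
    have h2 := ρ.triangle _ (hβ x y) _ (hα y z) _ (hβ y z)
    have h3 := eρ _ (hβ x y) _ (hα y z)
    have h4 := et (β x y) y (α y z)
    rw [hg x y, hg y z]; linarith
  let m : X → X → ℝ := fun x y => min D (min (e x y) (g x y))
  have m_D : ∀ x y, m x y ≤ D := fun x y => min_le_left _ _
  have m_e : ∀ x y, m x y ≤ e x y := fun x y => (min_le_right _ _).trans (min_le_left _ _)
  have m_g : ∀ x y, m x y ≤ g x y := fun x y => (min_le_right _ _).trans (min_le_right _ _)
  have m_pos : ∀ x y, 0 ≤ m x y := fun x y => le_min hD0 (le_min (epos x y) (gpos x y))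
  have m_cases : ∀ x y, m x y = D ∨ m x y = e x y ∨ m x y = g x y := by
    intro x y
    rcases min_choice D (min (e x y) (g x y)) with h | h
    · exact Or.inl h
    · rcases min_choice (e x y) (g x y) with h' | h'
      · exact Or.inr (Or.inl (h.trans h'))
      · exact Or.inr (Or.inr (h.trans h'))
  have ms : ∀ x y, m x y = m y x := by
    intro x y
    simp only [m]; rw [es x y, gs x y]
  have mt : ∀ x y z, m x z ≤ m x y + m y z := by
    intro x y z
    have := m_D x z
    have := m_e x z
    have := m_g x z
    have := m_pos x y
    have := m_pos y z
    have := et x y z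
    have := g1 x y z
    have := g2 x y z
    have := g3 x y z
    rcases m_cases x y with h | h | h <;> rcases m_cases y z with h' | h' | h' <;> linarith
  have mext : ∀ x y : X, x ∈ ρ.dom → y ∈ ρ.dom → m x y = ρ.d x y := by
    intro x y hx hy
    refine le_antisymm ((m_g x y).trans ?_) (le_min (hD x hx y hy) (le_min (eρ x hx y hy) ?_))
    · have := g_le x y x hx y hy
      rw [e0, e0] at this; linarith
    · have h1 := ρ.triangle x hx _ (hα x y) y hy
      have h2 := ρ.triangle _ (hα x y) _ (hβ x y) y hy
      have h3 := eρ _ hx _ (hα x y)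
      have h4 := eρ _ (hβ x y) _ hy
      rw [hg]; linarith
  refine ⟨⟨m, fun x => le_antisymm ((m_e x x).trans (e0 x).le) (m_pos x x), ms, mt,
    cont_of_small m ms mt fun ε hε => ?_⟩, mext, ?_, ?_⟩
  · obtain ⟨η, hη, h⟩ := ec ε hε
    exact ⟨η, hη, fun x y hxy => (m_e x y).trans_lt (h x y hxy)⟩
  · haveI : Nonempty X := ⟨a₀⟩
    haveI : Nonempty ρ.dom := ⟨⟨a₀, ha₀⟩⟩
    trans D
    · refine le_antisymm (ciSup_le fun p => m_D _ _) ?_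
      rw [hDdef, ← mext a₀ b₀ ha₀ hb₀]
      exact le_ciSup (f := fun p : X × X => m p.1 p.2)
        ⟨D, by rintro _ ⟨p, rfl⟩; exact m_D _ _⟩ (a₀, b₀)
    · refine le_antisymm ?_ (ciSup_le fun p => hD _ p.1.2 _ p.2.2)
      exact le_ciSup (f := fun p : ρ.dom × ρ.dom => ρ.d p.1 p.2)
        ⟨D, by rintro _ ⟨p, rfl⟩; exact hD _ p.1.2 _ p.2.2⟩ (⟨a₀, ha₀⟩, ⟨b₀, hb₀⟩)
  · rintro ⟨p, hp, q, hq, hpq⟩ hmet x y hxy h0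
    have e_eq : ∀ x y, e x y ≤ 0 → x = y := fun x y h => dist_le_zero.1 ((ed x y).trans h)
    change m x y = 0 at h0
    rcases m_cases x y with h | h | h
    · exact hmet p hp q hq hpq (le_antisymm ((hD p hp q hq).trans (by linarith)) (hpos p hp q hq))
    · exact hxy (e_eq x y (by linarith))
    · rw [h0, hg] at h
      have h1 := hpos _ (hα x y) _ (hβ x y)
      have h2 := epos x (α x y)
      have h3 := epos (β x y) y
      have k1 := e_eq _ _ (show e x (α x y) ≤ 0 by linarith)
      have k2 := e_eq _ _ (show e (β x y) y ≤ 0 by linarith)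
      by_cases hab : α x y = β x y
      · exact hxy (k1.trans (hab.trans k2))
      · exact hmet _ (hα x y) _ (hβ x y) hab (by linarith)

theorem stmt_7
    (X : Type*) [TopologicalSpace X] [CompactSpace X] [T2Space X]
    [MetrizableSpace X] [Nontrivial X] :
    ∃ u : PartialCPM X → CPM X,
      -- ũ is an extension operator
      (∀ (ρ : PartialCPM X) (x y : X), x ∈ ρ.dom → y ∈ ρ.dom →
        (u ρ).d x y = ρ.d x y) ∧
      -- ũ is regular
      (∀ ρ : PartialCPM X,
        (⨆ p : X × X, (u ρ).d p.1 p.2) = ⨆ p : ρ.dom × ρ.dom, ρ.d p.1 p.2) ∧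
      -- ũ(M̃) ⊆ M(X): ũ sends metrics on domains with ≥ 2 points to metrics on X
      (∀ ρ : PartialCPM X, ρ.dom.Nontrivial →
        (∀ x ∈ ρ.dom, ∀ y ∈ ρ.dom, x ≠ y → ρ.d x y ≠ 0) →
        ∀ x y : X, x ≠ y → (u ρ).d x y ≠ 0) := by
  letI := metrizableSpaceMetric X
  choose u h1 h2 h3 using fun ρ : PartialCPM X => exists_extension ρ
  exact ⟨u, h1, h2, h3⟩

end
end

section
/- (Fryszkowski selection theorem, in the case used in the paper) Let T = [0,1] with Lebesgue measure, let B be a separable Banach space, and let X be a compact metric space. Then every lower semicontinuous multivalued map F from X into L₁(T,B) whose values are closed decomposable subsets of L₁(T,B) admits a continuous single-valued selection f : X → L₁(T,B) with f(x) ∈ F(x) for all x ∈ X. -/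
/- STATEMENT 11 (Fryszkowski selection theorem, case used in the paper):
   Let T = [0,1] with Lebesgue measure, B a separable Banach space, X a compact
   metric space.  Every lower semicontinuous multivalued map F from X into
   L₁(T,B) with (nonempty) closed decomposable values admits a continuous
   single-valued selection f with f(x) ∈ F(x) for all x. -/

open MeasureTheory TopologicalSpace Set

noncomputable section

/-- `L₁(I,B)`: Bochner-integrable functions from the unit interval to `B`. -/
abbrev L1S (B : Type*) [NormedAddCommGroup B] : Type _ :=
  Lp B 1 (volume : Measure unitInterval)

open scoped Classical

/-- A set `Z ⊆ L₁(I,B)` is decomposable if for all `f, g ∈ Z` and every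
measurable `S ⊆ I`, the map equal to `f` on `S` and to `g` on `I \ S`
belongs to `Z`. -/
def Decomposable {B : Type*} [NormedAddCommGroup B] (Z : Set (L1S B)) : Prop :=
  ∀ f ∈ Z, ∀ g ∈ Z, ∀ S : Set unitInterval, MeasurableSet S →
    ∀ h : L1S B, (∀ᵐ t, (h : unitInterval → B) t = S.piecewise (⇑f) (⇑g) t) → h ∈ Z

section Helpers

variable {B : Type*} [NormedAddCommGroup B]

/-- restriction of an `L¹` function to a measurable set -/
def RR0 (S : Set unitInterval) (hS : MeasurableSet S) (u : L1S B) : L1S B :=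
  MemLp.toLp (S.indicator (u : unitInterval → B)) ((Lp.memLp u).indicator hS)

lemma RR0_coe (S : Set unitInterval) (hS : MeasurableSet S) (u : L1S B) :
    (RR0 S hS u : unitInterval → B) =ᵐ[volume] S.indicator u := by
  unfold RR0
  exact MemLp.coeFn_toLp _

lemma RR0_add (S : Set unitInterval) (hS : MeasurableSet S) (u v : L1S B) :
    RR0 S hS (u + v) = RR0 S hS u + RR0 S hS v := by
  apply Lp.ext
  filter_upwards [RR0_coe S hS (u + v), RR0_coe S hS u, RR0_coe S hS v,
    Lp.coeFn_add (RR0 S hS u) (RR0 S hS v), Lp.coeFn_add u v] with t h1 h3 h4 h2 h5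
  rw [h1, h2, Pi.add_apply, h3, h4]
  by_cases ht : t ∈ S
  · rw [indicator_of_mem ht, indicator_of_mem ht, indicator_of_mem ht, h5, Pi.add_apply]
  · simp [ht]

/-- restriction of an `L¹` function to a measurable set, as an additive map -/
def RR (S : Set unitInterval) (hS : MeasurableSet S) : L1S B →+ L1S B :=
  AddMonoidHom.mk' (RR0 S hS) (RR0_add S hS)

lemma RR_coe (S : Set unitInterval) (hS : MeasurableSet S) (u : L1S B) :
    (RR S hS u : unitInterval → B) =ᵐ[volume] S.indicator u := RR0_coe S hS u

lemma RR_norm (S : Set unitInterval) (hS : MeasurableSet S) (u : L1S B) :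
    ‖RR S hS u‖ = ∫ t in S, ‖u t‖ := by
  rw [L1.norm_eq_integral_norm, ← integral_indicator hS]
  apply integral_congr_ae
  filter_upwards [RR_coe S hS u] with t h
  rw [h, norm_indicator_eq_indicator_norm]

lemma RR_norm_le (S : Set unitInterval) (hS : MeasurableSet S) (u : L1S B) :
    ‖RR S hS u‖ ≤ ‖u‖ := by
  rw [RR_norm, L1.norm_eq_integral_norm]
  exact setIntegral_le_integral (L1.integrable_coeFn u).norm (Filter.Eventually.of_forall fun _ => norm_nonneg _)

lemma RR_disj (S S' : Set unitInterval) (hS : MeasurableSet S) (hS' : MeasurableSet S')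
    (hd : Disjoint S S') (u : L1S B) : RR S hS (RR S' hS' u) = 0 := by
  apply Lp.ext
  filter_upwards [RR_coe S hS (RR S' hS' u), RR_coe S' hS' u, Lp.coeFn_zero B 1 (volume : Measure unitInterval)] with t h1 h2 h3
  rw [h1, h3]
  by_cases ht : t ∈ S
  · simp [ht, h2, disjoint_left.1 hd ht]
  · simp [ht]

lemma RR_empty (S : Set unitInterval) (hS : MeasurableSet S) (he : S = ∅) (u : L1S B) : RR S hS u = 0 := by
  rw [← norm_eq_zero, RR_norm, he]; simp

lemma RR_sum {N : ℕ} (T : Fin N → Set unitInterval) (hT : ∀ i, MeasurableSet (T i))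
    (hd : ∀ i j, i ≠ j → Disjoint (T i) (T j)) (hc : ∀ t, ∃ i, t ∈ T i) (u : L1S B) :
    ∑ i, RR (T i) (hT i) u = u := by
  apply Lp.ext
  have h := fun i => RR_coe (T i) (hT i) u
  have h := Filter.eventually_all.2 h
  filter_upwards [h, Lp.coeFn_fun_finsetSum Finset.univ (fun i => RR (T i) (hT i) u)] with t h1 h2
  rw [h2]
  obtain ⟨i, hi⟩ := hc t
  rw [Finset.sum_eq_single i]
  · rw [h1 i]; simp [hi]
  · intro j _ hj
    rw [h1 j]
    simp [disjoint_left.1 (hd i j hj.symm) hi]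
  · simp

lemma dec_RR {Z : Set (L1S B)} (hZ : Decomposable Z) (S : Set unitInterval) (hS : MeasurableSet S)
    {f g : L1S B} (hf : f ∈ Z) (hg : g ∈ Z) : g + RR S hS (f - g) ∈ Z := by
  apply hZ f hf g hg S hS
  filter_upwards [Lp.coeFn_add g (RR S hS (f - g)), RR_coe S hS (f - g), Lp.coeFn_sub f g]
    with t h1 h2 h3
  rw [h1, Pi.add_apply, h2]
  by_cases ht : t ∈ S
  · rw [indicator_of_mem ht, h3, Pi.sub_apply, piecewise_eq_of_mem _ _ _ ht]; abel
  · rw [indicator_of_notMem ht, piecewise_eq_of_notMem _ _ _ ht, add_zero]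

lemma dec_sum {Z : Set (L1S B)} (hZ : Decomposable Z) {N : ℕ} (T : Fin N → Set unitInterval)
    (hT : ∀ i, MeasurableSet (T i))
    (hd : ∀ i j, i ≠ j → Disjoint (T i) (T j)) (hc : ∀ t, ∃ i, t ∈ T i)
    (w : Fin N → L1S B) (hw : ∀ i, w i ∈ Z) :
    ∑ i, RR (T i) (hT i) (w i) ∈ Z := by
  obtain ⟨i0, -⟩ := hc 0
  have key : ∀ J : Finset (Fin N), w i0 + ∑ i ∈ J, RR (T i) (hT i) (w i - w i0) ∈ Z := by
    intro J
    induction J using Finset.induction_on with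
    | empty => simpa using hw i0
    | insert j J hj ih =>
      have h := dec_RR hZ (T j) (hT j) (hw j) ih
      rw [Finset.sum_insert hj]
      convert h using 1
      have h0 : RR (T j) (hT j) (∑ i ∈ J, RR (T i) (hT i) (w i - w i0)) = 0 := by
        rw [map_sum]
        apply Finset.sum_eq_zero
        intro i hi
        exact RR_disj _ _ _ _ (hd j i (fun h => hj (h ▸ hi))) _
      rw [map_sub, map_sub, map_add, h0, add_zero]
      abel
  have h := key Finset.univ
  simp only [map_sub, Finset.sum_sub_distrib] at h
  rw [RR_sum T hT hd hc] at h
  simpa using h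

lemma cont_RR {X : Type*} [MetricSpace X] (s : unitInterval → ℝ) (hs : Measurable s)
    (hs0 : ∀ c : ℝ, ∀ᵐ t, s t ≠ c) (a b : X → ℝ) (ha : Continuous a) (hb : Continuous b)
    (hm : ∀ x, MeasurableSet {t | a x ≤ s t ∧ s t < b x}) (u : L1S B) :
    Continuous fun x => RR {t | a x ≤ s t ∧ s t < b x} (hm x) u := by
  rw [continuous_iff_continuousAt]
  intro x0
  rw [ContinuousAt, tendsto_iff_dist_tendsto_zero]
  have e : ∀ x, dist (RR {t | a x ≤ s t ∧ s t < b x} (hm x) u)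
      (RR {t | a x0 ≤ s t ∧ s t < b x0} (hm x0) u) =
      ∫ t, ‖{t | a x ≤ s t ∧ s t < b x}.indicator u t -
        {t | a x0 ≤ s t ∧ s t < b x0}.indicator u t‖ := by
    intro x
    rw [L1.dist_eq_integral_dist]
    apply integral_congr_ae
    filter_upwards [RR_coe _ (hm x) u, RR_coe _ (hm x0) u] with t h1 h2
    rw [h1, h2, dist_eq_norm]
  simp only [e]
  have hu := L1.integrable_coeFn u
  have := tendsto_integral_filter_of_dominated_convergence (μ := (volume : Measure unitInterval))
    (l := nhds x0)
    (F := fun x t => ‖{t | a x ≤ s t ∧ s t < b x}.indicator u t -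
        {t | a x0 ≤ s t ∧ s t < b x0}.indicator u t‖) (f := fun _ => (0:ℝ))
    (fun t => ‖u t‖ + ‖u t‖) ?_ ?_ ?_ ?_
  · simpa using this
  · refine Filter.Eventually.of_forall fun x => ?_
    exact ((hu.indicator (hm x)).sub (hu.indicator (hm x0))).norm.aestronglyMeasurable
  · refine Filter.Eventually.of_forall fun x => Filter.Eventually.of_forall fun t => ?_
    rw [norm_norm]
    exact (norm_sub_le _ _).trans (add_le_add (norm_indicator_le_norm_self _ _)
      (norm_indicator_le_norm_self _ _))
  · exact hu.norm.add hu.norm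
  · filter_upwards [hs0 (a x0), hs0 (b x0)] with t h1 h2
    apply tendsto_const_nhds.congr'
    have e1 : ∀ᶠ x in nhds x0, (a x ≤ s t ↔ a x0 ≤ s t) := by
      rcases lt_or_gt_of_ne h1 with h | h
      · filter_upwards [ha.continuousAt.eventually (lt_mem_nhds h)] with x hx
        constructor <;> intro h' <;> linarith
      · filter_upwards [ha.continuousAt.eventually (gt_mem_nhds h)] with x hx
        constructor <;> intro h' <;> linarith
    have e2 : ∀ᶠ x in nhds x0, (s t < b x ↔ s t < b x0) := by
      rcases lt_or_gt_of_ne h2 with h | h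
      · filter_upwards [hb.continuousAt.eventually (lt_mem_nhds h)] with x hx
        constructor <;> intro h' <;> linarith
      · filter_upwards [hb.continuousAt.eventually (gt_mem_nhds h)] with x hx
        constructor <;> intro h' <;> linarith
    filter_upwards [e1, e2] with x h3 h4
    by_cases h5 : a x0 ≤ s t ∧ s t < b x0
    · simp [indicator, h3, h4, h5]
    · simp [indicator, h3, h4, h5]

/-- fractional part of `n t` -/
def ss (n : ℕ) (t : unitInterval) : ℝ := Int.fract ((n : ℝ) * (t : ℝ))

lemma ss_meas (n : ℕ) : Measurable (ss n) := by
  unfold ss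
  exact measurable_fract.comp (measurable_const.mul measurable_subtype_coe)

lemma ss_ne (n : ℕ) (hn : 0 < n) (c : ℝ) : ∀ᵐ t : unitInterval, ss n t ≠ c := by
  have hc : {t : unitInterval | ss n t = c}.Countable := by
    have h1 : (range fun k : ℤ => ((k : ℝ) + c) / n).Countable := countable_range _
    refine (h1.preimage Subtype.val_injective).mono ?_
    intro t ht
    refine ⟨⌊(n : ℝ) * (t : ℝ)⌋, ?_⟩
    have h2 := Int.floor_add_fract ((n : ℝ) * (t : ℝ))
    have : ss n t = c := ht
    unfold ss at this
    have hn' : (n : ℝ) ≠ 0 := by positivity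
    simp only
    rw [← this, h2]; field_simp
  have := hc.measure_zero volume
  rw [ae_iff]
  simpa using this

lemma eq_cont (g : ℝ → ℝ) (hg : Continuous g) (hg0 : ∀ r, 0 ≤ g r) {ε : ℝ} (hε : 0 < ε) :
    ∀ᶠ n : ℕ in Filter.atTop, ∀ a b : ℝ, 0 ≤ a → a ≤ b → b ≤ 1 →
      ∫ t in {t : unitInterval | a ≤ ss n t ∧ ss n t < b}, g t ≤ (b - a) * (∫ t : unitInterval, g t) + ε := by
  have huc : UniformContinuousOn g (Icc 0 1) :=
    isCompact_Icc.uniformContinuousOn_of_continuous hg.continuousOn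
  rw [Metric.uniformContinuousOn_iff] at huc
  obtain ⟨δ, hδ, huc⟩ := huc (ε / 2) (by positivity)
  obtain ⟨n0, hn0⟩ := exists_nat_gt (1 / δ)
  filter_upwards [Filter.eventually_ge_atTop (n0 + 1)] with n hn a b ha hab hb
  have hnp : (0 : ℝ) < n := by
    have : 0 < n := by omega
    exact_mod_cast this
  have hnδ : 1 / (n : ℝ) < δ := by
    have h1 : ((n0 : ℝ) + 1) ≤ n := by exact_mod_cast hn
    rw [div_lt_iff₀ hnp]
    rw [div_lt_iff₀ hδ] at hn0
    nlinarith
  -- closeness on cells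
  have hcell : ∀ k ∈ Finset.range n, ∀ r ∈ Icc ((k : ℝ) / n) ((k + 1 : ℝ) / n),
      |g r - g (k / n)| ≤ ε / 2 := by
    intro k hk r hr
    have hk' : (k : ℝ) + 1 ≤ n := by exact_mod_cast Finset.mem_range.1 hk
    have h0 : (0 : ℝ) ≤ k / n := by positivity
    have h1 : ((k : ℝ) + 1) / n ≤ 1 := by rw [div_le_one hnp]; exact hk'
    have h2 : ((k : ℝ) + 1) / n = k / n + 1 / n := by ring
    have h3 : (0 : ℝ) < 1 / n := by positivity
    have := huc r ⟨h0.trans hr.1, hr.2.trans h1⟩ (k / n) ⟨h0, by linarith⟩ (by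
      rw [Real.dist_eq, abs_lt]; constructor <;> linarith [hr.1, hr.2])
    exact this.le
  -- transfer to ℝ
  have hI : ∫ t : unitInterval, g t = ∫ r in (0 : ℝ)..1, g r := by
    rw [intervalIntegral.integral_of_le zero_le_one, ← integral_Icc_eq_integral_Ioc]
    exact integral_subtype measurableSet_Icc g
  have hT : ∫ t in {t : unitInterval | a ≤ ss n t ∧ ss n t < b}, g t
      ≤ ∫ r in ⋃ k ∈ Finset.range n, Ico (((k : ℝ) + a) / n) ((k + b) / n), g r := by
    have hm : MeasurableSet {r : ℝ | a ≤ Int.fract (n * r) ∧ Int.fract (n * r) < b} := by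
      have : Measurable fun r : ℝ => Int.fract ((n : ℝ) * r) :=
        measurable_fract.comp (measurable_const.mul measurable_id)
      exact (measurableSet_le measurable_const this).inter (measurableSet_lt this measurable_const)
    have e1 : ∫ t in {t : unitInterval | a ≤ ss n t ∧ ss n t < b}, g t
        = ∫ r in {r : ℝ | a ≤ Int.fract (n * r) ∧ Int.fract (n * r) < b} ∩ Icc 0 1, g r := by
      have hm' : MeasurableSet {t : unitInterval | a ≤ ss n t ∧ ss n t < b} :=
        (measurableSet_le measurable_const (ss_meas n)).inter
          (measurableSet_lt (ss_meas n) measurable_const)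
      rw [← integral_indicator hm', inter_comm, ← setIntegral_indicator hm]
      rw [← integral_subtype measurableSet_Icc]
      rfl
    rw [e1]
    refine setIntegral_mono_set ?_ (Filter.Eventually.of_forall fun r => hg0 r) ?_
    · apply (hg.integrableOn_Icc (a := 0) (b := 1)).mono_set
      intro r hr
      simp only [mem_iUnion] at hr
      obtain ⟨k, hk, hr⟩ := hr
      have hk' : (k : ℝ) + 1 ≤ n := by exact_mod_cast Finset.mem_range.1 hk
      refine ⟨le_trans (by positivity) hr.1, hr.2.le.trans ?_⟩
      rw [div_le_one hnp]; linarith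
    · have h1 : ∀ᵐ r : ℝ, r ≠ 1 := by
        rw [ae_iff]; simp
      filter_upwards [h1] with r hr1 hr
      obtain ⟨⟨h2, h3⟩, h4, h5⟩ := hr
      have h6 : 0 ≤ (n : ℝ) * r := by positivity
      have h7 : (n : ℝ) * r < n := by
        have : r < 1 := lt_of_le_of_ne h5 hr1
        nlinarith
      have h8 : Int.fract ((n : ℝ) * r) = n * r - ⌊(n : ℝ) * r⌋₊ := by
        rw [Int.fract, ← natCast_floor_eq_intCast_floor h6]
      rw [h8] at h2 h3
      show r ∈ ⋃ k ∈ Finset.range n, Ico (((k : ℝ) + a) / n) ((k + b) / n)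
      simp only [mem_iUnion]
      refine ⟨⌊(n : ℝ) * r⌋₊, Finset.mem_range.2 ((Nat.floor_lt h6).2 h7), ?_, ?_⟩
      · rw [div_le_iff₀ hnp]; linarith
      · rw [lt_div_iff₀ hnp]; linarith
  have hU : ∫ r in ⋃ k ∈ Finset.range n, Ico (((k : ℝ) + a) / n) ((k + b) / n), g r
      = ∑ k ∈ Finset.range n, ∫ r in (((k : ℝ) + a) / n)..((k + b) / n), g r := by
    rw [integral_biUnion_finset]
    · refine Finset.sum_congr rfl fun k _ => ?_
      rw [intervalIntegral.integral_of_le (by gcongr), integral_Ico_eq_integral_Ioo,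
        integral_Ioc_eq_integral_Ioo]
    · intro k _; exact measurableSet_Ico
    · intro k _ l _ hkl
      rw [Function.onFun, disjoint_left]
      rintro r ⟨h1, h2⟩ ⟨h3, h4⟩
      rw [div_le_iff₀ hnp] at h1 h3
      rw [lt_div_iff₀ hnp] at h2 h4
      rcases lt_or_gt_of_ne hkl with h | h
      · have : (k : ℝ) + 1 ≤ l := by exact_mod_cast h
        linarith
      · have : (l : ℝ) + 1 ≤ k := by exact_mod_cast h
        linarith
    · intro k _
      exact hg.integrableOn_Icc.mono_set Ico_subset_Icc_self
  have hS : ∫ r in (0 : ℝ)..1, g r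
      = ∑ k ∈ Finset.range n, ∫ r in ((k : ℝ) / n)..((k + 1 : ℝ) / n), g r := by
    have := intervalIntegral.sum_integral_adjacent_intervals (f := g) (μ := volume)
      (a := fun k : ℕ => (k : ℝ) / n) (n := n) (fun k _ => hg.intervalIntegrable _ _)
    push_cast at this
    rw [this]
    simp [hnp.ne']
  have hup : ∀ k ∈ Finset.range n, ∫ r in (((k : ℝ) + a) / n)..((k + b) / n), g r
      ≤ (b - a) / n * (g (k / n) + ε / 2) := by
    intro k hk
    have h1 : ((k : ℝ) + a) / n ≤ (k + b) / n := by gcongr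
    calc _ ≤ ∫ r in (((k : ℝ) + a) / n)..((k + b) / n), (g (k / n) + ε / 2) := by
          refine intervalIntegral.integral_mono_on h1 (hg.intervalIntegrable _ _)
            (by simp) ?_
          intro r hr
          have := hcell k hk r ⟨le_trans (by gcongr; linarith) hr.1, hr.2.trans (by gcongr)⟩
          linarith [(abs_le.1 this).2]
      _ = _ := by
          rw [intervalIntegral.integral_const, smul_eq_mul]; ring
  have hlo : ∀ k ∈ Finset.range n, 1 / (n : ℝ) * (g (k / n) - ε / 2) ≤
      ∫ r in ((k : ℝ) / n)..((k + 1 : ℝ) / n), g r := by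
    intro k hk
    have h1 : (k : ℝ) / n ≤ (k + 1) / n := by gcongr; linarith
    calc 1 / (n : ℝ) * (g (k / n) - ε / 2) =
          ∫ r in ((k : ℝ) / n)..((k + 1 : ℝ) / n), (g (k / n) - ε / 2) := by
          rw [intervalIntegral.integral_const, smul_eq_mul]; ring
      _ ≤ _ := by
          refine intervalIntegral.integral_mono_on h1 (by simp) (hg.intervalIntegrable _ _) ?_
          intro r hr
          have := hcell k hk r hr
          linarith [(abs_le.1 this).1]
  rw [hI]
  refine hT.trans ?_
  rw [hU, hS, Finset.mul_sum]
  calc _ ≤ ∑ k ∈ Finset.range n, (b - a) / n * (g (k / n) + ε / 2) := Finset.sum_le_sum hup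
    _ ≤ ∑ k ∈ Finset.range n, ((b - a) * (∫ r in ((k : ℝ) / n)..((k + 1 : ℝ) / n), g r) + ε / n) := by
        refine Finset.sum_le_sum fun k hk => ?_
        have h1 := mul_le_mul_of_nonneg_left (hlo k hk) (sub_nonneg.2 hab)
        have h2 : (b - a) / n * (g (k / n) + ε / 2) =
          (b - a) * (1 / (n : ℝ) * (g (k / n) - ε / 2)) + (b - a) * (ε / n) := by ring
        rw [h2]
        have h3 : (b - a) * (ε / n) ≤ 1 * (ε / n) := by
          gcongr; linarith
        linarith
    _ = _ := by
        rw [Finset.sum_add_distrib]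
        congr 1
        simp; field_simp

lemma tmeas (n : ℕ) (a b : ℝ) : MeasurableSet {t : unitInterval | a ≤ ss n t ∧ ss n t < b} :=
  (measurableSet_le measurable_const (ss_meas n)).inter
    (measurableSet_lt (ss_meas n) measurable_const)

lemma eq_L1 [NormedSpace ℝ B] (h : L1S B) {ε : ℝ} (hε : 0 < ε) :
    ∀ᶠ n : ℕ in Filter.atTop, ∀ a b : ℝ, 0 ≤ a → a ≤ b → b ≤ 1 →
      ‖RR {t : unitInterval | a ≤ ss n t ∧ ss n t < b} (tmeas n a b) h‖ ≤ (b - a) * ‖h‖ + ε := by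
  have hd := ContinuousMap.toLp_denseRange (p := 1) B (volume : Measure unitInterval) ℝ (by simp)
  obtain ⟨c, hc⟩ := hd.exists_dist_lt h (ε := ε / 3) (by positivity)
  set h' : L1S B := ContinuousMap.toLp 1 (volume : Measure unitInterval) ℝ c with hh'
  have hcc : (h' : unitInterval → B) =ᵐ[volume] c := ContinuousMap.coeFn_toLp _ c
  let g : ℝ → ℝ := fun r => ‖c (projIcc 0 1 zero_le_one r)‖
  have hg : Continuous g := (c.continuous.comp continuous_projIcc).norm
  have hgt : ∀ t : unitInterval, g t = ‖c t‖ := fun t => by simp [g]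
  filter_upwards [eq_cont g hg (fun r => norm_nonneg _) (ε := ε / 3) (by positivity)]
    with n hn a b ha hab hb
  have h1 := hn a b ha hab hb
  have h2 : ∫ t : unitInterval, g t = ‖h'‖ := by
    rw [L1.norm_eq_integral_norm]
    apply integral_congr_ae
    filter_upwards [hcc] with t ht
    rw [ht, hgt]
  have h3 : ∫ t in {t : unitInterval | a ≤ ss n t ∧ ss n t < b}, g t =
      ‖RR {t : unitInterval | a ≤ ss n t ∧ ss n t < b} (tmeas n a b) h'‖ := by
    rw [RR_norm]
    apply integral_congr_ae
    filter_upwards [ae_restrict_of_ae hcc] with t ht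
    rw [ht, hgt]
  rw [h2, h3] at h1
  rw [dist_eq_norm] at hc
  have h4 := RR_norm_le _ (tmeas n a b) (h - h')
  rw [map_sub] at h4
  have h5 := norm_sub_norm_le (RR _ (tmeas n a b) h) (RR _ (tmeas n a b) h')
  have h6 := norm_sub_norm_le h' h
  rw [norm_sub_rev] at h6
  have h7 : (b - a) * (‖h'‖ - ‖h‖) ≤ ε / 3 := by
    have : (b - a) * (‖h'‖ - ‖h‖) ≤ (b - a) * (ε / 3) := by gcongr; linarith
    have : (b - a) * (ε / 3) ≤ 1 * (ε / 3) := by gcongr; linarith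
    linarith
  linarith

lemma part_exists (ψ : ℕ → ℝ) (N : ℕ) (hN : ∑ j ∈ Finset.range N, ψ j = 1) (s : ℝ)
    (hs0 : 0 ≤ s) (hs1 : s < 1) :
    ∃ i < N, ∑ j ∈ Finset.range i, ψ j ≤ s ∧ s < ∑ j ∈ Finset.range (i + 1), ψ j := by
  have hex : ∃ k, s < ∑ j ∈ Finset.range k, ψ j := ⟨N, by rw [hN]; exact hs1⟩
  have h1 := Nat.find_spec hex
  have h2 : Nat.find hex ≤ N := Nat.find_min' hex (by rw [hN]; exact hs1)
  obtain ⟨m, hm⟩ : ∃ m, Nat.find hex = m + 1 := by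
    apply Nat.exists_eq_succ_of_ne_zero
    intro h0
    rw [h0] at h1
    simp at h1
    linarith
  refine ⟨m, by omega, ?_, by rw [← hm]; exact h1⟩
  exact not_lt.1 (Nat.find_min hex (m := m) (by omega))

lemma step [NormedSpace ℝ B] {X : Type*} [MetricSpace X] [CompactSpace X]
    (F : X → Set (L1S B))
    (hF_lsc : ∀ U : Set (L1S B), IsOpen U → IsOpen {x : X | (F x ∩ U).Nonempty})
    (hF_ne : ∀ x, (F x).Nonempty)
    (hF_dec : ∀ x, Decomposable (F x)) (f : C(X, L1S B)) (ε δ : ℝ) (hε : 0 < ε) (hδ : 0 < δ)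
    (hf : ∀ x, ∃ u ∈ F x, ‖u - f x‖ < ε) :
    ∃ f' : C(X, L1S B), (∀ x, ∃ w ∈ F x, ‖f' x - w‖ ≤ 2 * δ) ∧
      ∀ x, ‖f' x - f x‖ ≤ ε + δ := by
  choose u0 hu0 hu0' using hf
  let U0 : X → Set X := fun x0 =>
    {x | (F x ∩ Metric.ball (u0 x0) δ).Nonempty} ∩ {x | ‖u0 x0 - f x‖ < ε}
  have hU0 : ∀ x0, IsOpen (U0 x0) := fun x0 =>
    (hF_lsc _ Metric.isOpen_ball).inter
      (isOpen_lt (continuous_const.sub f.continuous).norm continuous_const)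
  have hU0m : ∀ x0, x0 ∈ U0 x0 := fun x0 =>
    ⟨⟨u0 x0, hu0 x0, Metric.mem_ball_self hδ⟩, hu0' x0⟩
  obtain ⟨t, ht⟩ := isCompact_univ.elim_finite_subcover U0 hU0
    (fun x _ => mem_iUnion.2 ⟨x, hU0m x⟩)
  set N := t.card with hN
  let e := t.equivFin
  let u : Fin N → L1S B := fun i => u0 (e.symm i)
  let U : Fin N → Set X := fun i => U0 (e.symm i)
  have hU : ∀ i, IsOpen (U i) := fun i => hU0 _
  have hcov : (univ : Set X) ⊆ ⋃ i, U i := by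
    intro x hx
    have := ht hx
    simp only [mem_iUnion] at this ⊢
    obtain ⟨y, hy, hxy⟩ := this
    exact ⟨e ⟨y, hy⟩, by simpa [U] using hxy⟩
  obtain ⟨φ, hφ⟩ := PartitionOfUnity.exists_isSubordinate isClosed_univ U hU hcov
  have hφsum : ∀ x, ∑ i, φ i x = 1 := fun x => by
    rw [← finsum_eq_sum_of_fintype]; exact φ.sum_eq_one (mem_univ x)
  have hφ0 : ∀ i x, 0 ≤ φ i x := fun i x => φ.nonneg i x
  -- natural-number indexed version
  let ψ : X → ℕ → ℝ := fun x j => if h : j < N then φ ⟨j, h⟩ x else 0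
  have hψ : ∀ x (i : Fin N), ψ x i = φ i x := fun x i => by simp [ψ]
  have hψ0 : ∀ x j, 0 ≤ ψ x j := fun x j => by
    simp only [ψ]; split_ifs
    · exact hφ0 _ _
    · exact le_rfl
  have hψc : ∀ j, Continuous fun x => ψ x j := fun j => by
    by_cases h : j < N
    · simp only [ψ, h, dif_pos]; exact (φ ⟨j, h⟩).continuous
    · simp only [ψ, h, dif_neg, not_false_eq_true]; exact continuous_const
  let Λ : ℕ → X → ℝ := fun k x => ∑ j ∈ Finset.range k, ψ x j
  have hΛc : ∀ k, Continuous (Λ k) := fun k => continuous_finsetSum _ fun j _ => hψc j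
  have hΛ1 : ∀ x, Λ N x = 1 := fun x => by
    rw [← hφsum x]
    simp only [Λ]
    rw [← Fin.sum_univ_eq_sum_range]
    exact Finset.sum_congr rfl fun i _ => hψ x i
  have hΛmono : ∀ x, Monotone fun k => Λ k x := fun x => by
    apply monotone_nat_of_le_succ
    intro k
    simp only [Λ, Finset.sum_range_succ]
    linarith [hψ0 x k]
  have hΛs : ∀ x (i : Fin N), Λ (i + 1) x - Λ i x = φ i x := fun x i => by
    simp only [Λ, Finset.sum_range_succ, hψ]; ring
  have hΛ0 : ∀ k x, 0 ≤ Λ k x := fun k x => Finset.sum_nonneg fun j _ => hψ0 x j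
  -- second cover
  obtain ⟨η, hη, hηN⟩ : ∃ η : ℝ, 0 < η ∧ N * (2 * η) ≤ δ := by
    refine ⟨δ / (2 * (N + 1)), by positivity, ?_⟩
    have : (N : ℝ) * (2 * (δ / (2 * (N + 1)))) = δ * (N / (N + 1)) := by field_simp
    rw [this]
    have : (N : ℝ) / (N + 1) ≤ 1 := by rw [div_le_one (by positivity)]; linarith
    nlinarith
  have hv : ∀ (i : Fin N) (y : X), ∃ v ∈ F y, y ∈ U i → ‖u i - v‖ < δ := by
    intro i y
    by_cases hy : y ∈ U i
    · obtain ⟨v, hv, hv'⟩ := hy.1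
      refine ⟨v, hv, fun _ => ?_⟩
      rw [Metric.mem_ball, dist_eq_norm, norm_sub_rev] at hv'
      exact hv'
    · obtain ⟨v, hv⟩ := hF_ne y
      exact ⟨v, hv, fun h => absurd h hy⟩
  choose v hvF hvU using hv
  let W : X → Set X := fun y => (⋂ i, {x | (F x ∩ Metric.ball (v i y) η).Nonempty}) ∩
    {x | ‖f y - f x‖ < η} ∩ ⋂ i, {x | x ∈ tsupport (φ i) → y ∈ U i}
  have hWo : ∀ y, IsOpen (W y) := by
    intro y
    refine ((isOpen_iInter_of_finite fun i => hF_lsc _ Metric.isOpen_ball).inter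
      (isOpen_lt (continuous_const.sub f.continuous).norm continuous_const)).inter
      (isOpen_iInter_of_finite fun i => ?_)
    by_cases hy : y ∈ U i
    · simp [hy]
    · simp only [hy, imp_false]
      exact (isClosed_tsupport (φ i)).isOpen_compl
  have hWm : ∀ y, y ∈ W y := by
    intro y
    refine ⟨⟨mem_iInter.2 fun i => ⟨v i y, hvF i y, Metric.mem_ball_self hη⟩, ?_⟩,
      mem_iInter.2 fun i hi => hφ i hi⟩
    simpa using hη
  obtain ⟨Y, hY⟩ := isCompact_univ.elim_finite_subcover W hWo
    (fun x _ => mem_iUnion.2 ⟨x, hWm x⟩)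
  -- equidistribution
  have hev : ∀ᶠ n : ℕ in Filter.atTop, ∀ i : Fin N, ∀ y ∈ Y,
      (∀ a b : ℝ, 0 ≤ a → a ≤ b → b ≤ 1 →
      ‖RR {t : unitInterval | a ≤ ss n t ∧ ss n t < b} (tmeas n a b) (u i - v i y)‖
        ≤ (b - a) * ‖u i - v i y‖ + η) ∧
      (∀ a b : ℝ, 0 ≤ a → a ≤ b → b ≤ 1 →
      ‖RR {t : unitInterval | a ≤ ss n t ∧ ss n t < b} (tmeas n a b) (u i - f y)‖
        ≤ (b - a) * ‖u i - f y‖ + η) := by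
    rw [Filter.eventually_all]
    intro i
    rw [Filter.eventually_all_finset]
    intro y _
    exact (eq_L1 _ hη).and (eq_L1 _ hη)
  obtain ⟨n, hn, hn0⟩ := (hev.and (Filter.eventually_gt_atTop 0)).exists
  let T : X → Fin N → Set unitInterval := fun x i =>
    {t | Λ i x ≤ ss n t ∧ ss n t < Λ (i + 1) x}
  have hTm : ∀ x i, MeasurableSet (T x i) := fun x i => tmeas n _ _
  have hTd : ∀ x i j, i ≠ j → Disjoint (T x i) (T x j) := by
    intro x i j hij
    rw [disjoint_left]
    rintro t ⟨h1, h2⟩ ⟨h3, h4⟩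
    rcases lt_or_gt_of_ne hij with h | h
    · have : Λ (i + 1) x ≤ Λ j x := hΛmono x (show (i : ℕ) + 1 ≤ j from h)
      linarith
    · have : Λ (j + 1) x ≤ Λ i x := hΛmono x (show (j : ℕ) + 1 ≤ i from h)
      linarith
  have hTc : ∀ x t, ∃ i, t ∈ T x i := by
    intro x t
    obtain ⟨i, hi, h1, h2⟩ := part_exists (ψ x) N (hΛ1 x) (ss n t) (Int.fract_nonneg _)
      (Int.fract_lt_one _)
    exact ⟨⟨i, hi⟩, h1, h2⟩
  have hT0 : ∀ x i, φ i x = 0 → T x i = ∅ := by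
    intro x i h
    have := hΛs x i
    rw [eq_empty_iff_forall_notMem]
    rintro t ⟨h1, h2⟩
    linarith
  let f' : X → L1S B := fun x => ∑ i, RR (T x i) (hTm x i) (u i)
  have hf'c : Continuous f' := continuous_finsetSum _ fun i _ =>
    cont_RR (ss n) (ss_meas n) (ss_ne n hn0) (Λ i) (Λ (i + 1)) (hΛc _) (hΛc _)
      (fun x => hTm x i) (u i)
  -- general estimate
  have est : ∀ (x : X) (i : Fin N) (g g' : L1S B) (c : ℝ), ‖g - g'‖ < η →
      ‖RR (T x i) (hTm x i) (u i - g)‖ ≤ (Λ (i + 1) x - Λ i x) * ‖u i - g‖ + η →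
      ‖u i - g‖ ≤ c →
      ‖RR (T x i) (hTm x i) (u i - g')‖ ≤ φ i x * c + 2 * η := by
    intro x i g g' c h1 h2 h3
    have h4 : u i - g' = (u i - g) + (g - g') := by abel
    rw [h4, map_add]
    have h5 := norm_add_le (RR (T x i) (hTm x i) (u i - g)) (RR (T x i) (hTm x i) (g - g'))
    have h6 := RR_norm_le (T x i) (hTm x i) (g - g')
    rw [hΛs] at h2
    have h7 := mul_le_mul_of_nonneg_left h3 (hφ0 i x)
    linarith
  have hsum : ∀ (x : X) (c : ℝ), ∑ i, (φ i x * c + 2 * η) ≤ c + δ := by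
    intro x c
    rw [Finset.sum_add_distrib, ← Finset.sum_mul, hφsum, one_mul]
    simp only [Finset.sum_const, Finset.card_univ, Fintype.card_fin, nsmul_eq_mul]
    linarith
  have hle1 : ∀ x (i : Fin N), Λ (i + 1) x ≤ 1 := fun x i => by
    rw [← hΛ1 x]; exact hΛmono x (show (i : ℕ) + 1 ≤ N from i.2)
  have hle2 : ∀ x (i : Fin N), Λ i x ≤ Λ (i + 1) x := fun x i => hΛmono x (Nat.le_succ _)
  refine ⟨⟨f', hf'c⟩, ?_, ?_⟩
  · intro x
    have := hY (mem_univ x)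
    simp only [mem_iUnion] at this
    obtain ⟨y, hy, ⟨hx1, hx2⟩, hx3⟩ := this
    rw [mem_iInter] at hx1 hx3
    choose w hwF hwb using hx1
    refine ⟨_, dec_sum (hF_dec x) (T x) (hTm x) (hTd x) (hTc x) w hwF, ?_⟩
    show ‖(∑ i, RR (T x i) (hTm x i) (u i)) - ∑ i, RR (T x i) (hTm x i) (w i)‖ ≤ 2 * δ
    rw [← Finset.sum_sub_distrib]
    refine (norm_sum_le _ _).trans ?_
    refine (Finset.sum_le_sum (g := fun i => φ i x * δ + 2 * η) fun i _ => ?_).trans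
      ((hsum x δ).trans (by linarith))
    rw [← map_sub]
    by_cases hyU : y ∈ U i
    · refine est x i (v i y) (w i) δ ?_ ?_ (hvU i y hyU).le
      · have := hwb i
        rwa [Metric.mem_ball, dist_eq_norm, norm_sub_rev] at this
      · exact (hn i y hy).1 _ _ (hΛ0 _ _) (hle2 x i) (hle1 x i)
    · have h0 : φ i x = 0 := image_eq_zero_of_notMem_tsupport fun h => hyU (hx3 i h)
      rw [RR_empty _ _ (hT0 x i h0), norm_zero]
      have := hφ0 i x
      positivity
  · intro x
    have := hY (mem_univ x)
    simp only [mem_iUnion] at this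
    obtain ⟨y, hy, ⟨hx1, hx2⟩, hx3⟩ := this
    rw [mem_iInter] at hx3
    show ‖(∑ i, RR (T x i) (hTm x i) (u i)) - f x‖ ≤ ε + δ
    rw [← RR_sum (T x) (hTm x) (hTd x) (hTc x) (f x), ← Finset.sum_sub_distrib]
    refine (norm_sum_le _ _).trans ?_
    refine (Finset.sum_le_sum (g := fun i => φ i x * ε + 2 * η) fun i _ => ?_).trans
      (hsum x ε)
    rw [← map_sub]
    by_cases hyU : y ∈ U i
    · refine est x i (f y) (f x) ε hx2 ?_ (le_of_lt hyU.2)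
      exact (hn i y hy).2 _ _ (hΛ0 _ _) (hle2 x i) (hle1 x i)
    · have h0 : φ i x = 0 := image_eq_zero_of_notMem_tsupport fun h => hyU (hx3 i h)
      rw [RR_empty _ _ (hT0 x i h0), norm_zero]
      have := hφ0 i x
      positivity

end Helpers

theorem stmt_11
    {B : Type*} [NormedAddCommGroup B] [NormedSpace ℝ B] [CompleteSpace B]
    [SeparableSpace B]
    (X : Type*) [MetricSpace X] [CompactSpace X]
    (F : X → Set (L1S B))
    -- F is lower semicontinuous
    (hF_lsc : ∀ U : Set (L1S B), IsOpen U → IsOpen {x : X | (F x ∩ U).Nonempty})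
    -- F has nonempty closed decomposable values
    (hF_ne : ∀ x, (F x).Nonempty)
    (hF_closed : ∀ x, IsClosed (F x))
    (hF_dec : ∀ x, Decomposable (F x)) :
    -- F admits a continuous single-valued selection
    ∃ f : X → L1S B, Continuous f ∧ ∀ x, f x ∈ F x := by
  -- the starting bound
  obtain ⟨m, hm⟩ : ∃ m : ℕ, ∀ x, (F x ∩ Metric.ball 0 m).Nonempty := by
    obtain ⟨t, ht⟩ := isCompact_univ.elim_finite_subcover
      (fun m : ℕ => {x : X | (F x ∩ Metric.ball 0 (m : ℝ)).Nonempty})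
      (fun m => hF_lsc _ Metric.isOpen_ball) (by
        intro x _
        obtain ⟨u, hu⟩ := hF_ne x
        obtain ⟨m, hm⟩ := exists_nat_gt ‖u‖
        exact mem_iUnion.2 ⟨m, u, hu, by simpa using hm⟩)
    refine ⟨t.sup id, fun x => ?_⟩
    have := ht (mem_univ x)
    simp only [mem_iUnion] at this
    obtain ⟨k, hk, u, hu, hub⟩ := this
    refine ⟨u, hu, Metric.ball_subset_ball ?_ hub⟩
    exact_mod_cast Finset.le_sup (f := id) hk
  let C : ℝ := m + 1
  have hC : 0 < C := by positivity
  let E : ℕ → ℝ := fun k => C * (1 / 2) ^ k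
  have hE : ∀ k, 0 < E k := fun k => by positivity
  let P := fun k => {f : C(X, L1S B) // ∀ x, ∃ u ∈ F x, ‖u - f x‖ < E k}
  have hstep : ∀ k (f : P k), ∃ g : P (k + 1), dist f.1 g.1 ≤ (2 * C) * (1 / 2) ^ k := by
    intro k f
    obtain ⟨g, hg1, hg2⟩ := step F hF_lsc hF_ne hF_dec f.1 (E k) (E k / 5) (hE k)
      (by have := hE k; positivity) f.2
    refine ⟨⟨g, fun x => ?_⟩, ?_⟩
    · obtain ⟨w, hw, hw'⟩ := hg1 x
      refine ⟨w, hw, ?_⟩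
      rw [norm_sub_rev]
      have h1 : E (k + 1) = E k / 2 := by simp only [E, pow_succ]; ring
      have := hE k
      linarith
    · rw [ContinuousMap.dist_le (by positivity)]
      intro x
      rw [dist_comm, dist_eq_norm]
      have h1 := hg2 x
      have h2 : (2 * C) * (1 / 2) ^ k = 2 * E k := by simp only [E]; ring
      have := hE k
      rw [h2]
      linarith
  choose nx hnx using hstep
  let f0 : P 0 := ⟨0, fun x => by
    obtain ⟨u, hu, hub⟩ := hm x
    refine ⟨u, hu, ?_⟩
    have h1 : ‖u‖ < m := by simpa using hub
    simp only [E, C, pow_zero, mul_one, ContinuousMap.zero_apply, sub_zero]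
    linarith⟩
  let s : ∀ k, P k := fun k => Nat.rec f0 (fun k f => nx k f) k
  have hs : ∀ k, dist (s k).1 (s (k + 1)).1 ≤ (2 * C) * (1 / 2) ^ k := fun k => hnx k (s k)
  have hcau := cauchySeq_of_le_geometric (1 / 2) (2 * C) (f := fun k => (s k).1) (by norm_num) hs
  obtain ⟨f, hf⟩ := cauchySeq_tendsto_of_complete hcau
  refine ⟨f, f.continuous, fun x => ?_⟩
  have hfx : Filter.Tendsto (fun k => (s k).1 x) Filter.atTop (nhds (f x)) :=
    ((continuous_eval_const x).tendsto f).comp hf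
  choose w hwF hw using fun k => (s k).2 x
  have hE0 : Filter.Tendsto E Filter.atTop (nhds 0) := by
    have := (tendsto_pow_atTop_nhds_zero_of_lt_one (r := (1 / 2 : ℝ)) (by norm_num)
      (by norm_num)).const_mul C
    simpa [E] using this
  have hd : Filter.Tendsto (fun k => w k - (s k).1 x) Filter.atTop (nhds 0) :=
    squeeze_zero_norm (fun k => (hw k).le) hE0
  have hwt : Filter.Tendsto w Filter.atTop (nhds (f x)) := by
    have := hd.add hfx
    simpa using this
  exact (hF_closed x).mem_of_tendsto hwt (Filter.Eventually.of_forall hwF)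

end
end

section
/- For a compact Hausdorff space X the following conditions are equivalent: (1) there exists a continuous extension operator u : PM → PM(X); (2) there exists a continuous map Ψ : (X × X) ∖ Δ_X → PM(X), (x,y) ↦ Ψ_{(x,y)}, such that Ψ_{(x,y)}(x,y) ≠ 0 for all (x,y) ∈ (X × X) ∖ Δ_X; (3) X is metrizable. -/
/- STATEMENT 12: For a compact Hausdorff space X, TFAE:
   (1) there exists a continuous extension operator u : PM → PM(X);
   (2) there exists a continuous map Ψ : (X × X) ∖ Δ_X → PM(X) with
       Ψ_{(x,y)}(x,y) ≠ 0 for all (x,y) off the diagonal;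
   (3) X is metrizable.
   PM and PM(X) carry the topology induced from exp(X × X × ℝ) (Vietoris)
   by identifying pseudometrics with their graphs. -/
open TopologicalSpace Set

noncomputable section

variable {X : Type*} [TopologicalSpace X]

/-! ### General lemmas on infima -/

theorem sInf_le_add_aux {R S T : Set ℝ} (hR : ∀ r ∈ R, 0 ≤ r) (hS : S.Nonempty) (hT : T.Nonempty)
    (h : ∀ s ∈ S, ∀ t ∈ T, ∃ r ∈ R, r ≤ s + t) : sInf R ≤ sInf S + sInf T := by
  have hb : BddBelow R := ⟨0, hR⟩
  have h1 : ∀ s ∈ S, sInf R - s ≤ sInf T := fun s hs => le_csInf hT fun t ht => by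
    obtain ⟨r, hr, hle⟩ := h s hs t ht
    linarith [csInf_le hb hr]
  have h2 : sInf R - sInf T ≤ sInf S := le_csInf hS fun s hs => by linarith [h1 s hs]
  linarith

theorem sInf_le_add_const_aux {R S : Set ℝ} (hR : ∀ r ∈ R, 0 ≤ r) (hS : S.Nonempty) (c : ℝ)
    (h : ∀ s ∈ S, ∃ r ∈ R, r ≤ s + c) : sInf R ≤ sInf S + c := by
  have := sInf_le_add_aux (T := {c}) hR hS (singleton_nonempty c) (by simpa using h)
  simpa using this

/-! ### (3) ⇒ (1) -/

section Ext

open Topology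

set_option linter.unusedSectionVars false

variable {M : Type*} [MetricSpace M] [CompactSpace M]

theorem PartialCPM.nonneg (ρ : PartialCPM M) {a b : M} (ha : a ∈ ρ.dom) (hb : b ∈ ρ.dom) :
    0 ≤ ρ.d a b := by
  have h := ρ.triangle a ha b hb a ha
  rw [ρ.refl a ha, ρ.symm b hb a ha] at h
  linarith

/-- `(α, β)` majorizes `ρ` -/
def Maj (ρ : PartialCPM M) (p : ℝ × ℝ) : Prop :=
  0 ≤ p.1 ∧ 0 ≤ p.2 ∧ ∀ a ∈ ρ.dom, ∀ b ∈ ρ.dom, ρ.d a b ≤ p.1 + p.2 * dist a b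

theorem exists_maj (ρ : PartialCPM M) {ε : ℝ} (hε : 0 < ε) : ∃ β, Maj ρ (ε, β) := by
  have hc : IsCompact (ρ.dom ×ˢ ρ.dom) := (ρ.dom_closed.prod ρ.dom_closed).isCompact
  have hu := hc.uniformContinuousOn_of_continuous ρ.cont
  rw [Metric.uniformContinuousOn_iff] at hu
  obtain ⟨δ, hδ, hu⟩ := hu ε hε
  obtain ⟨C, hC⟩ := hc.exists_bound_of_continuousOn ρ.cont
  obtain ⟨a₀, ha₀⟩ := ρ.dom_ne
  have hC0 : 0 ≤ C := (norm_nonneg _).trans (hC (a₀, a₀) ⟨ha₀, ha₀⟩)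
  refine ⟨C / δ, hε.le, by positivity, fun a ha b hb => ?_⟩
  by_cases h : dist a b < δ
  · have := hu (a, b) ⟨ha, hb⟩ (a, a) ⟨ha, ha⟩ (by
      rw [Prod.dist_eq]; simpa [dist_comm b a, hδ] using h)
    simp only [ρ.refl a ha, Real.dist_eq, sub_zero] at this
    have h3 := (abs_lt.1 this).2
    have : 0 ≤ C / δ * dist a b := by positivity
    simp only; linarith
  · have h1 := (le_abs_self _).trans (hC (a, b) ⟨ha, hb⟩)
    have h2 : C ≤ C / δ * dist a b := by
      calc C = C / δ * δ := by field_simp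
        _ ≤ _ := by gcongr; exact not_lt.1 h
    simp only at h1 ⊢; linarith

def wSet (ρ : PartialCPM M) (t : ℝ) : Set ℝ := (fun p : ℝ × ℝ => p.1 + p.2 * t) '' {p | Maj ρ p}

/-- concave modulus of continuity -/
def wMod (ρ : PartialCPM M) (t : ℝ) : ℝ := sInf (wSet ρ t)

theorem wSet_nonempty (ρ : PartialCPM M) (t : ℝ) : (wSet ρ t).Nonempty := by
  obtain ⟨β, h⟩ := exists_maj ρ one_pos
  exact ⟨_, _, h, rfl⟩

theorem wSet_nonneg (ρ : PartialCPM M) {t : ℝ} (ht : 0 ≤ t) : ∀ r ∈ wSet ρ t, 0 ≤ r := by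
  rintro _ ⟨p, ⟨h1, h2, -⟩, rfl⟩
  positivity

theorem wMod_nonneg (ρ : PartialCPM M) {t : ℝ} (ht : 0 ≤ t) : 0 ≤ wMod ρ t :=
  le_csInf (wSet_nonempty ρ t) (wSet_nonneg ρ ht)

theorem wMod_le (ρ : PartialCPM M) {t : ℝ} (ht : 0 ≤ t) {p : ℝ × ℝ} (hp : Maj ρ p) :
    wMod ρ t ≤ p.1 + p.2 * t :=
  csInf_le ⟨0, wSet_nonneg ρ ht⟩ ⟨p, hp, rfl⟩

theorem wMod_ge (ρ : PartialCPM M) {a b : M} (ha : a ∈ ρ.dom) (hb : b ∈ ρ.dom) :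
    ρ.d a b ≤ wMod ρ (dist a b) := by
  refine le_csInf (wSet_nonempty ρ _) ?_
  rintro _ ⟨p, ⟨-, -, h⟩, rfl⟩
  exact h a ha b hb

theorem wMod_mono (ρ : PartialCPM M) {s t : ℝ} (hs : 0 ≤ s) (h : s ≤ t) :
    wMod ρ s ≤ wMod ρ t := by
  refine le_csInf (wSet_nonempty ρ _) ?_
  rintro _ ⟨p, hp, rfl⟩
  refine (wMod_le ρ hs hp).trans ?_
  have := mul_le_mul_of_nonneg_left h hp.2.1
  simp only; linarith

theorem wMod_add (ρ : PartialCPM M) {s t : ℝ} (hs : 0 ≤ s) (ht : 0 ≤ t) :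
    wMod ρ (s + t) ≤ wMod ρ s + wMod ρ t := by
  refine sInf_le_add_aux (wSet_nonneg ρ (by positivity)) (wSet_nonempty ρ _) (wSet_nonempty ρ _) ?_
  rintro _ ⟨p, hp, rfl⟩ _ ⟨q, hq, rfl⟩
  have hp1 := hp.1
  have hq1 := hq.1
  rcases le_total p.2 q.2 with h | h
  · refine ⟨_, ⟨p, hp, rfl⟩, ?_⟩
    simp only
    nlinarith
  · refine ⟨_, ⟨q, hq, rfl⟩, ?_⟩
    simp only
    nlinarith

theorem wMod_small (ρ : PartialCPM M) {ε : ℝ} (hε : 0 < ε) :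
    ∃ δ > 0, ∀ t, 0 ≤ t → t ≤ δ → wMod ρ t < ε := by
  obtain ⟨β, h⟩ := exists_maj ρ (half_pos hε)
  have hβ : 0 ≤ β := h.2.1
  refine ⟨ε / (4 * (β + 1)), by positivity, fun t ht htd => ?_⟩
  have h1 := wMod_le ρ ht h
  have h2 : β * t ≤ ε / 4 := by
    calc β * t ≤ (β + 1) * (ε / (4 * (β + 1))) := by gcongr; linarith
      _ = ε / 4 := by field_simp
  simp only at h1
  linarith

theorem wMod_zero (ρ : PartialCPM M) : wMod ρ 0 = 0 := by
  refine le_antisymm (le_of_forall_pos_le_add fun ε hε => ?_) (wMod_nonneg ρ le_rfl)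
  obtain ⟨δ, hδ, h⟩ := wMod_small ρ hε
  linarith [h 0 le_rfl hδ.le]

theorem wMod_tri (ρ : PartialCPM M) (x y z : M) :
    wMod ρ (dist x z) ≤ wMod ρ (dist x y) + wMod ρ (dist y z) :=
  (wMod_mono ρ dist_nonneg (dist_triangle x y z)).trans (wMod_add ρ dist_nonneg dist_nonneg)

def eSet (ρ : PartialCPM M) (x y : M) : Set ℝ :=
  {r | r = wMod ρ (dist x y) ∨ ∃ a ∈ ρ.dom, ∃ b ∈ ρ.dom,
    r = wMod ρ (dist x a) + ρ.d a b + wMod ρ (dist b y)}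

def eVal (ρ : PartialCPM M) (x y : M) : ℝ := sInf (eSet ρ x y)

theorem eSet_nonempty (ρ : PartialCPM M) (x y : M) : (eSet ρ x y).Nonempty := ⟨_, Or.inl rfl⟩

theorem eSet_nonneg (ρ : PartialCPM M) (x y : M) : ∀ r ∈ eSet ρ x y, 0 ≤ r := by
  rintro r (rfl | ⟨a, ha, b, hb, rfl⟩)
  · exact wMod_nonneg ρ dist_nonneg
  · have := wMod_nonneg ρ (dist_nonneg (x := x) (y := a))
    have := wMod_nonneg ρ (dist_nonneg (x := b) (y := y))
    have := ρ.nonneg ha hb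
    positivity

theorem eVal_le (ρ : PartialCPM M) (x y : M) {r : ℝ} (h : r ∈ eSet ρ x y) : eVal ρ x y ≤ r :=
  csInf_le ⟨0, eSet_nonneg ρ x y⟩ h

theorem eVal_le_w (ρ : PartialCPM M) (x y : M) : eVal ρ x y ≤ wMod ρ (dist x y) :=
  eVal_le ρ x y (Or.inl rfl)

theorem eVal_nonneg (ρ : PartialCPM M) (x y : M) : 0 ≤ eVal ρ x y :=
  le_csInf (eSet_nonempty ρ x y) (eSet_nonneg ρ x y)

theorem eVal_refl (ρ : PartialCPM M) (x : M) : eVal ρ x x = 0 := by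
  refine le_antisymm ((eVal_le_w ρ x x).trans ?_) (eVal_nonneg ρ x x)
  rw [dist_self, wMod_zero]

theorem eSet_symm (ρ : PartialCPM M) (x y : M) : eSet ρ x y ⊆ eSet ρ y x := by
  rintro r (rfl | ⟨a, ha, b, hb, rfl⟩)
  · exact Or.inl (by rw [dist_comm])
  · refine Or.inr ⟨b, hb, a, ha, ?_⟩
    rw [ρ.symm b hb a ha, dist_comm y b, dist_comm a x]
    ring

theorem eVal_symm (ρ : PartialCPM M) (x y : M) : eVal ρ x y = eVal ρ y x := by
  unfold eVal
  rw [(eSet_symm ρ x y).antisymm (eSet_symm ρ y x)]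

theorem eVal_tri (ρ : PartialCPM M) (x y z : M) : eVal ρ x z ≤ eVal ρ x y + eVal ρ y z := by
  refine sInf_le_add_aux (eSet_nonneg ρ x z) (eSet_nonempty ρ _ _) (eSet_nonempty ρ _ _) ?_
  rintro s (rfl | ⟨a, ha, b, hb, rfl⟩) t (rfl | ⟨a', ha', b', hb', rfl⟩)
  · exact ⟨_, Or.inl rfl, wMod_tri ρ x y z⟩
  · refine ⟨_, Or.inr ⟨a', ha', b', hb', rfl⟩, ?_⟩
    linarith [wMod_tri ρ x y a']
  · refine ⟨_, Or.inr ⟨a, ha, b, hb, rfl⟩, ?_⟩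
    linarith [wMod_tri ρ b y z]
  · refine ⟨_, Or.inr ⟨a, ha, b', hb', rfl⟩, ?_⟩
    have h1 := ρ.triangle a ha b hb b' hb'
    have h2 := ρ.triangle b hb a' ha' b' hb'
    have h3 := wMod_ge ρ hb ha'
    linarith [wMod_tri ρ b y a']

theorem eVal_ext (ρ : PartialCPM M) {x y : M} (hx : x ∈ ρ.dom) (hy : y ∈ ρ.dom) :
    eVal ρ x y = ρ.d x y := by
  refine le_antisymm (eVal_le ρ x y (Or.inr ⟨x, hx, y, hy, ?_⟩))
    (le_csInf (eSet_nonempty ρ x y) ?_)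
  · simp [wMod_zero]
  · rintro s (rfl | ⟨a, ha, b, hb, rfl⟩)
    · exact wMod_ge ρ hx hy
    · linarith [ρ.triangle x hx a ha y hy, ρ.triangle a ha b hb y hy, wMod_ge ρ hx ha,
        wMod_ge ρ hb hy]

theorem eVal_cont (ρ : PartialCPM M) : Continuous fun p : M × M => eVal ρ p.1 p.2 := by
  rw [Metric.continuous_iff]
  intro p ε hε
  obtain ⟨δ, hδ, h⟩ := wMod_small ρ (half_pos hε)
  refine ⟨δ, hδ, fun q hq => ?_⟩
  rw [Prod.dist_eq, max_lt_iff] at hq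
  have h1 := (eVal_le_w ρ q.1 p.1).trans_lt (h _ dist_nonneg hq.1.le)
  have h2 := (eVal_le_w ρ q.2 p.2).trans_lt (h _ dist_nonneg hq.2.le)
  have t1 := eVal_tri ρ q.1 p.1 q.2
  have t2 := eVal_tri ρ p.1 p.2 q.2
  have t3 := eVal_tri ρ p.1 q.1 p.2
  have t4 := eVal_tri ρ q.1 q.2 p.2
  rw [eVal_symm ρ p.2 q.2] at t2
  rw [eVal_symm ρ p.1 q.1] at t3
  rw [Real.dist_eq, abs_lt]
  constructor <;> linarith

def extOp (ρ : PartialCPM M) : CPM M where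
  d := eVal ρ
  refl := eVal_refl ρ
  symm := eVal_symm ρ
  triangle := eVal_tri ρ
  cont := eVal_cont ρ

/-- the graph of `ρ` is in the `η`-neighbourhood of that of `σ` -/
def Near (η : ℝ) (ρ σ : PartialCPM M) : Prop :=
  ∀ a ∈ ρ.dom, ∀ b ∈ ρ.dom, ∃ a' ∈ σ.dom, ∃ b' ∈ σ.dom,
    dist a a' ≤ η ∧ dist b b' ≤ η ∧ |ρ.d a b - σ.d a' b'| ≤ η

theorem wMod_near {η : ℝ} (hη : 0 ≤ η) {ρ σ : PartialCPM M} (h : Near η σ ρ) {t : ℝ}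
    (ht : 0 ≤ t) : wMod σ t ≤ wMod ρ t + (wMod ρ (2 * η) + η) := by
  have key : wMod σ t ≤ wMod ρ (t + 2 * η) + η := by
    refine sInf_le_add_const_aux (wSet_nonneg σ ht) (wSet_nonempty ρ _) _ ?_
    rintro _ ⟨p, ⟨h1, h2, h3⟩, rfl⟩
    refine ⟨_, ⟨(p.1 + p.2 * (2 * η) + η, p.2), ⟨by positivity, h2, ?_⟩, rfl⟩, ?_⟩
    · intro a ha b hb
      obtain ⟨a', ha', b', hb', ha1, hb1, hd⟩ := h a ha b hb
      have h4 := h3 a' ha' b' hb'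
      have h5 : dist a' b' ≤ dist a b + 2 * η := by
        have t1 := dist_triangle a' a b'
        have t2 := dist_triangle a b b'
        rw [dist_comm a' a] at t1
        linarith
      have h6 := mul_le_mul_of_nonneg_left h5 h2
      have h7 := (abs_le.1 hd).2
      simp only
      nlinarith
    · simp only
      nlinarith
  have := wMod_add ρ ht (by positivity : (0 : ℝ) ≤ 2 * η)
  linarith

theorem eVal_near {η : ℝ} (hη : 0 ≤ η) {ρ σ : PartialCPM M} (h : Near η σ ρ) (h' : Near η ρ σ)
    (x y : M) : eVal σ x y ≤ eVal ρ x y + (4 * wMod ρ (2 * η) + 3 * η) := by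
  have hw := wMod_nonneg ρ (by positivity : (0 : ℝ) ≤ 2 * η)
  refine sInf_le_add_const_aux (eSet_nonneg σ x y) (eSet_nonempty ρ _ _) _ ?_
  rintro s (rfl | ⟨a, ha, b, hb, rfl⟩)
  · refine ⟨_, Or.inl rfl, ?_⟩
    linarith [wMod_near hη h (dist_nonneg (x := x) (y := y))]
  · obtain ⟨a', ha', b', hb', ha1, hb1, hd⟩ := h' a ha b hb
    refine ⟨_, Or.inr ⟨a', ha', b', hb', rfl⟩, ?_⟩
    have h7 := (abs_le.1 hd).1
    have e1 := wMod_near hη h (dist_nonneg (x := x) (y := a'))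
    have e2 := wMod_near hη h (dist_nonneg (x := b') (y := y))
    have e3 := wMod_tri ρ x a a'
    have e4 := wMod_tri ρ b' b y
    have e5 := wMod_mono ρ dist_nonneg (by linarith : dist a a' ≤ 2 * η)
    have e6 := wMod_mono ρ dist_nonneg (by rw [dist_comm]; linarith : dist b' b ≤ 2 * η)
    linarith

theorem isOpen_vietoris_sub {Y : Type*} [TopologicalSpace Y] {U : Set Y} (hU : IsOpen U) :
    IsOpen[vietoris Y] {K | K ⊆ U} :=
  TopologicalSpace.isOpen_generateFrom_of_mem ⟨U, hU, Or.inl rfl⟩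

theorem isOpen_vietoris_hit {Y : Type*} [TopologicalSpace Y] {U : Set Y} (hU : IsOpen U) :
    IsOpen[vietoris Y] {K | (K ∩ U).Nonempty} :=
  TopologicalSpace.isOpen_generateFrom_of_mem ⟨U, hU, Or.inr rfl⟩

theorem isCompact_graph (ρ : PartialCPM M) : IsCompact ρ.graph := by
  have hc : IsCompact (ρ.dom ×ˢ ρ.dom) := (ρ.dom_closed.prod ρ.dom_closed).isCompact
  have := hc.image_of_continuousOn (f := fun p : M × M => (p.1, p.2, ρ.d p.1 p.2))
    (continuous_fst.continuousOn.prodMk (continuous_snd.continuousOn.prodMk ρ.cont))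
  convert this using 1
  ext ⟨a, b, t⟩
  simp only [PartialCPM.graph, mem_ofPred_eq, mem_image, mem_prod, Prod.exists, Prod.mk.injEq]
  constructor
  · rintro ⟨h1, h2, rfl⟩
    exact ⟨a, b, ⟨h1, h2⟩, rfl, rfl, rfl⟩
  · rintro ⟨a, b, ⟨h1, h2⟩, rfl, rfl, rfl⟩
    exact ⟨h1, h2, rfl⟩

theorem near_of {η : ℝ} {ρ σ : PartialCPM M}
    (h : ∀ p ∈ ρ.graph, ∃ q ∈ σ.graph, dist p q < η) : Near η ρ σ := by
  intro a ha b hb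
  obtain ⟨⟨a', b', t⟩, ⟨h1, h2, h3⟩, h4⟩ := h (a, b, ρ.d a b) ⟨ha, hb, rfl⟩
  simp only at h1 h2 h3
  rw [Prod.dist_eq, Prod.dist_eq, max_lt_iff, max_lt_iff, Real.dist_eq] at h4
  simp only [h3] at h4
  exact ⟨a', h1, b', h2, h4.1.le, h4.2.1.le, h4.2.2.le⟩

theorem eventually_near (ρ : PartialCPM M) {η : ℝ} (hη : 0 < η) :
    ∀ᶠ σ in nhds ρ, Near η σ ρ ∧ Near η ρ σ := by
  have hgc : Continuous[_, vietoris _] (PartialCPM.graph (X := M)) := continuous_induced_dom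
  refine Filter.Eventually.and ?_ ?_
  · have ho : IsOpen {σ : PartialCPM M | σ.graph ⊆ Metric.thickening η ρ.graph} :=
      @IsOpen.preimage _ _ _ (vietoris _) _ hgc _ (isOpen_vietoris_sub Metric.isOpen_thickening)
    filter_upwards [ho.mem_nhds (Metric.self_subset_thickening hη _)] with σ hσ
    exact near_of fun p hp => by simpa [Metric.mem_thickening_iff] using hσ hp
  · obtain ⟨t, htg, htf, htc⟩ := (isCompact_graph ρ).finite_cover_balls (half_pos hη)
    have h1 : ∀ᶠ σ in nhds ρ, ∀ q ∈ t, (σ.graph ∩ Metric.ball q (η / 2)).Nonempty := by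
      rw [Filter.eventually_all_finite htf]
      intro q hq
      have ho : IsOpen {σ : PartialCPM M | (σ.graph ∩ Metric.ball q (η / 2)).Nonempty} :=
        @IsOpen.preimage _ _ _ (vietoris _) _ hgc _ (isOpen_vietoris_hit Metric.isOpen_ball)
      exact ho.mem_nhds ⟨q, htg hq, Metric.mem_ball_self (half_pos hη)⟩
    filter_upwards [h1] with σ hσ
    refine near_of fun p hp => ?_
    obtain ⟨q, hq, hpq⟩ := mem_iUnion₂.1 (htc hp)
    obtain ⟨r, hr, hrq⟩ := hσ q hq
    refine ⟨r, hr, ?_⟩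
    have := dist_triangle_right p r q
    rw [Metric.mem_ball] at hpq hrq
    linarith

theorem isCompact_graph' (ρ : CPM M) : IsCompact ρ.graph := by
  have := isCompact_range (f := fun p : M × M => (p.1, p.2, ρ.d p.1 p.2))
    (continuous_fst.prodMk (continuous_snd.prodMk ρ.cont))
  convert this using 1
  ext ⟨a, b, t⟩
  simp only [CPM.graph, mem_ofPred_eq, mem_range, Prod.exists, Prod.mk.injEq]
  constructor
  · rintro rfl
    exact ⟨a, b, rfl, rfl, rfl⟩
  · rintro ⟨a, b, rfl, rfl, rfl⟩
    rfl

theorem continuous_to_CPM {Z : Type*} [TopologicalSpace Z] (F : Z → CPM M)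
    (h : ∀ z₀, ∀ ε > 0, ∀ᶠ z in nhds z₀, ∀ x y, |(F z).d x y - (F z₀).d x y| < ε) :
    Continuous F := by
  refine continuous_induced_rng.2 (continuous_generateFrom_iff.2 ?_)
  rintro _ ⟨U, hU, rfl | rfl⟩
  · rw [isOpen_iff_mem_nhds]
    intro z₀ hz
    obtain ⟨ε, hε, hsub⟩ := (isCompact_graph' (F z₀)).exists_thickening_subset_open hU hz
    filter_upwards [h z₀ ε hε] with z hz
    rintro ⟨a, b, t⟩ ht
    replace ht : t = (F z).d a b := ht
    refine hsub (Metric.mem_thickening_iff.2 ⟨(a, b, (F z₀).d a b), rfl, ?_⟩)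
    simpa [Prod.dist_eq, ht, Real.dist_eq, hε] using hz a b
  · rw [isOpen_iff_mem_nhds]
    rintro z₀ ⟨⟨a, b, t⟩, ht, hp⟩
    replace ht : t = (F z₀).d a b := ht
    subst ht
    obtain ⟨ε, hε, hsub⟩ := Metric.isOpen_iff.1 hU _ hp
    filter_upwards [h z₀ ε hε] with z hz
    refine ⟨(a, b, (F z).d a b), rfl, hsub ?_⟩
    simpa [Metric.mem_ball, Prod.dist_eq, Real.dist_eq, hε] using hz a b

theorem continuous_extOp : Continuous (extOp (M := M)) := by
  refine continuous_to_CPM _ fun ρ ε hε => ?_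
  obtain ⟨δ, hδ, h⟩ := wMod_small ρ (by positivity : 0 < ε / 24)
  set η := min (δ / 2) (ε / 48) with hη
  have hη0 : 0 < η := by positivity
  have h1 : η ≤ δ / 2 := min_le_left _ _
  have h2 : η ≤ ε / 48 := min_le_right _ _
  have h3 := h (2 * η) (by positivity) (by linarith)
  filter_upwards [eventually_near ρ hη0] with σ ⟨n1, n2⟩ x y
  have e1 := eVal_near hη0.le n1 n2 x y
  have e2 := eVal_near hη0.le n2 n1 x y
  have e3 := wMod_near hη0.le n1 (by positivity : (0 : ℝ) ≤ 2 * η)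
  change |eVal σ x y - eVal ρ x y| < ε
  rw [abs_lt]
  constructor <;> linarith

end Ext

theorem three_one (X : Type*) [TopologicalSpace X] [CompactSpace X] [T2Space X]
    (h : MetrizableSpace X) : ∃ u : PartialCPM X → CPM X, Continuous u ∧
        ∀ (ρ : PartialCPM X) (x y : X), x ∈ ρ.dom → y ∈ ρ.dom →
          (u ρ).d x y = ρ.d x y := by
  let _ := metrizableSpaceMetric X
  exact ⟨extOp, continuous_extOp, fun ρ x y hx hy => eVal_ext ρ hx hy⟩

/-! ### (1) ⇒ (2) -/

section OneTwo

open Classical in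
/-- the metric on the two-point set -/
def twoPt {X : Type*} [TopologicalSpace X] [T2Space X] (p : X × X) : PartialCPM X where
  dom := {p.1, p.2}
  dom_ne := ⟨p.1, by simp⟩
  dom_closed := (Set.toFinite _).isClosed
  d := fun x y => if x = y then 0 else 1
  refl := by simp
  symm := by intro x _ y _; simp only [eq_comm]
  triangle := by
    intro x _ y _ z _
    by_cases h1 : x = y
    · subst h1; simp
    · by_cases h2 : y = z
      · subst h2; simp
      · simp only [h1, h2, if_false]
        split_ifs <;> norm_num
  cont := ((Set.toFinite _).prod (Set.toFinite _)).continuousOn _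

theorem mem_twoPt {X : Type*} [TopologicalSpace X] [T2Space X] {p : X × X} (h : p.1 ≠ p.2) :
    (twoPt p).graph = {(p.1, p.1, 0), (p.1, p.2, 1), (p.2, p.1, 1), (p.2, p.2, 0)} := by
  ext ⟨a, b, t⟩
  simp only [PartialCPM.graph, twoPt, mem_ofPred_eq, mem_insert_iff, mem_singleton_iff,
    Prod.mk.injEq]
  constructor
  · rintro ⟨rfl | rfl, rfl | rfl, h3⟩ <;> simp [h, h.symm] at h3 ⊢ <;> exact h3
  · rintro (⟨rfl, rfl, rfl⟩ | ⟨rfl, rfl, rfl⟩ | ⟨rfl, rfl, rfl⟩ | ⟨rfl, rfl, rfl⟩) <;>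
      simp [h, h.symm]

theorem one_two (X : Type*) [TopologicalSpace X] [CompactSpace X] [T2Space X]
    (h : ∃ u : PartialCPM X → CPM X, Continuous u ∧
        ∀ (ρ : PartialCPM X) (x y : X), x ∈ ρ.dom → y ∈ ρ.dom →
          (u ρ).d x y = ρ.d x y) :
    ∃ Ψ : {p : X × X // p.1 ≠ p.2} → CPM X, Continuous Ψ ∧
        ∀ p : {p : X × X // p.1 ≠ p.2}, (Ψ p).d p.1.1 p.1.2 ≠ 0 := by
  obtain ⟨u, hu, hext⟩ := h
  refine ⟨fun p => u (twoPt p.1), hu.comp ?_, fun p => ?_⟩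
  · refine continuous_induced_rng.2 (continuous_generateFrom_iff.2 ?_)
    have c1 : Continuous fun p : {p : X × X // p.1 ≠ p.2} => (p.1.1, p.1.1, (0 : ℝ)) := by fun_prop
    have c2 : Continuous fun p : {p : X × X // p.1 ≠ p.2} => (p.1.1, p.1.2, (1 : ℝ)) := by fun_prop
    have c3 : Continuous fun p : {p : X × X // p.1 ≠ p.2} => (p.1.2, p.1.1, (1 : ℝ)) := by fun_prop
    have c4 : Continuous fun p : {p : X × X // p.1 ≠ p.2} => (p.1.2, p.1.2, (0 : ℝ)) := by fun_prop
    rintro _ ⟨U, hU, rfl | rfl⟩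
    · convert (((hU.preimage c1).inter (hU.preimage c2)).inter (hU.preimage c3)).inter
        (hU.preimage c4) using 1
      ext p
      change (twoPt p.1).graph ⊆ U ↔ _
      rw [mem_twoPt p.2]
      simp only [insert_subset_iff, singleton_subset_iff, mem_inter_iff, mem_preimage]
      tauto
    · convert (((hU.preimage c1).union (hU.preimage c2)).union (hU.preimage c3)).union
        (hU.preimage c4) using 1
      ext p
      change ((twoPt p.1).graph ∩ U).Nonempty ↔ _
      rw [mem_twoPt p.2]
      simp only [Set.Nonempty, mem_inter_iff, mem_insert_iff, mem_singleton_iff, or_and_right,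
        exists_or, exists_eq_left, mem_union, mem_preimage]
      tauto
  · rw [hext _ _ _ (by simp [twoPt]) (by simp [twoPt])]
    simp [twoPt, p.2]

end OneTwo

/-! ### (2) ⇒ (3) -/

section TwoThree

open Topology

set_option linter.unusedSectionVars false

/-- Closing off a countable set under countably-valued finitary operations. -/
theorem exists_closed_off {T : Type*} (G : Finset T → Set T) (hG : ∀ F, (G F).Countable) :
    ∃ S : Set T, S.Countable ∧ ∀ F : Finset T, (F : Set T) ⊆ S → G F ⊆ S := by
  let step : Set T → Set T := fun S => S ∪ ⋃ F : Finset S, G (F.map (Function.Embedding.subtype _))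
  let S : ℕ → Set T := fun n => step^[n] ∅
  have hsucc : ∀ n, S (n + 1) = step (S n) := fun n => Function.iterate_succ_apply' _ _ _
  have hc : ∀ n, (S n).Countable := by
    intro n
    induction n with
    | zero => simp [S]
    | succ n ih =>
      rw [hsucc]
      have := ih.to_subtype
      exact ih.union (countable_iUnion fun F => hG _)
  have hmono : Monotone S := monotone_nat_of_le_succ fun n => by
    rw [hsucc]; exact subset_union_left
  refine ⟨⋃ n, S n, countable_iUnion hc, fun F hF => ?_⟩
  obtain ⟨n, hn⟩ : ∃ n, (F : Set T) ⊆ S n :=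
    hmono.directed_le.exists_mem_subset_of_finset_subset_biUnion hF
  refine subset_trans ?_ (subset_iUnion S (n + 1))
  rw [hsucc]
  classical
  have h1 : (F.subtype (· ∈ S n)).map (Function.Embedding.subtype _) = F :=
    Finset.subtype_map_of_mem fun x hx => hn hx
  refine subset_union_of_subset_right ?_ _
  intro x hx
  refine mem_iUnion.2 ⟨F.subtype (· ∈ S n), ?_⟩
  rw [h1]
  exact hx

variable {X : Type*} [TopologicalSpace X] [CompactSpace X] [T2Space X]

/-- points separated by a map to a metric space -/
theorem exists_sep {Y : Type*} [MetricSpace Y] (h : X → Y) (hc : Continuous h) :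
    ∃ C : Set C(X, ℝ), C.Countable ∧ ∀ x x', (∀ g ∈ C, g x = g x') → h x = h x' := by
  obtain ⟨t, hts, htc, htd⟩ := (isCompact_range hc).isSeparable.exists_countable_dense_subset
  refine ⟨(fun p => ⟨fun x => dist (h x) p, by fun_prop⟩) '' t, htc.image _, fun x x' hx => ?_⟩
  have h1 : ∀ p ∈ t, dist (h x) p = dist (h x') p := fun p hp => hx _ ⟨p, hp, rfl⟩
  have h2 : h x ∈ closure t := htd ⟨x, rfl⟩
  have h3 : closure t ⊆ {p | dist (h x) p = dist (h x') p} :=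
    closure_minimal h1 (isClosed_eq (by fun_prop) (by fun_prop))
  have h4 : dist (h x) (h x) = dist (h x') (h x) := h3 h2
  rw [dist_self] at h4
  exact (dist_eq_zero.1 h4.symm).symm

theorem exists_dense_aux (A : Set X) (F : Finset C(X, ℝ)) :
    ∃ C : Set X, C.Countable ∧ C ⊆ A ∧ ∀ y ∈ A, ∀ u : C(X, ℝ) → Set ℝ,
      (∀ f ∈ F, IsOpen (u f) ∧ f y ∈ u f) → ∃ b ∈ C, ∀ f ∈ F, f b ∈ u f := by
  let q : X → (F → ℝ) := fun x f => f.1 x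
  obtain ⟨t, hts, htc, htd⟩ :=
    (TopologicalSpace.IsSeparable.of_separableSpace (q '' A)).exists_countable_dense_subset
  obtain ⟨C, hCA, hinj, himg⟩ := SurjOn.exists_subset_injOn_image_eq (s := A) (f := q) (t := t) hts
  refine ⟨C, Set.countable_of_injective_of_countable_image hinj (himg ▸ htc), hCA, ?_⟩
  intro y hy u hu
  have h1 : q y ∈ closure t := htd ⟨y, hy, rfl⟩
  have h2 : IsOpen (Set.pi univ fun f : F => u f.1) :=
    isOpen_set_pi finite_univ fun f _ => (hu f.1 f.2).1
  obtain ⟨z, hz1, hz2⟩ := mem_closure_iff.1 h1 _ h2 fun f _ => (hu f.1 f.2).2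
  rw [← himg] at hz2
  obtain ⟨b, hb, rfl⟩ := hz2
  exact ⟨b, hb, fun f hf => hz1 ⟨f, hf⟩ (mem_univ _)⟩

theorem continuous_h {Φ : X → X → C(X, ℝ)}
    (hcont : ∀ x y, x ≠ y → ContinuousAt (fun p : X × X => Φ p.1 p.2) (x, y))
    (hb : ∀ x y, ‖Φ x y‖ ≤ 1) (a : X) (f : C(X, ℝ)) :
    Continuous fun x => |f x - f a| • Φ a x := by
  rw [continuous_iff_continuousAt]
  intro x
  by_cases h : a = x
  · subst h
    have h0 : Filter.Tendsto (fun x => |f x - f a|) (𝓝 a) (𝓝 0) := by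
      have : Continuous fun x => |f x - f a| := by fun_prop
      simpa using this.tendsto a
    unfold ContinuousAt
    simp only [sub_self, abs_zero, zero_smul]
    refine squeeze_zero_norm (fun x => ?_) h0
    rw [norm_smul, Real.norm_eq_abs, abs_abs]
    exact mul_le_of_le_one_right (abs_nonneg _) (hb _ _)
  · have h1 : ContinuousAt (fun x => Φ a x) x :=
      ContinuousAt.comp (f := fun x => (a, x)) (g := fun p : X × X => Φ p.1 p.2) (hcont a x h)
        (by fun_prop)
    have h2 : ContinuousAt (fun x => |f x - f a|) x := by fun_prop
    exact h2.smul h1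

theorem metrizable_of_sep {Φ : X → X → C(X, ℝ)}
    (hcont : ∀ x y, x ≠ y → ContinuousAt (fun p : X × X => Φ p.1 p.2) (x, y))
    (hb : ∀ x y, ‖Φ x y‖ ≤ 1) (h0 : ∀ x, Φ x x = 0) (hsep : ∀ x y, x ≠ y → Φ x y x ≠ Φ x y y) :
    MetrizableSpace X := by
  rcases isEmpty_or_nonempty X with hX | ⟨⟨x₀⟩⟩
  · infer_instance
  choose G2 hG2c hG2 using fun (a : X) (f : C(X, ℝ)) => exists_sep _ (continuous_h hcont hb a f)
  choose G3 hG3c hG3s hG3 using fun (a : X) (F : Finset C(X, ℝ)) => exists_dense_aux ({a}ᶜ) F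
  let G : Finset (X ⊕ C(X, ℝ)) → Set (X ⊕ C(X, ℝ)) := fun F =>
    {Sum.inl x₀} ∪ (⋃ a ∈ F.toLeft, ⋃ b ∈ F.toLeft, {Sum.inr (Φ a b)}) ∪
      (⋃ a ∈ F.toLeft, ⋃ f ∈ F.toRight, Sum.inr '' G2 a f) ∪
      (⋃ a ∈ F.toLeft, Sum.inl '' G3 a F.toRight)
  have hG : ∀ F, (G F).Countable := by
    intro F
    refine (((countable_singleton _).union ?_).union ?_).union ?_
    · exact F.toLeft.countable_toSet.biUnion fun a _ =>
        F.toLeft.countable_toSet.biUnion fun b _ => countable_singleton _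
    · exact F.toLeft.countable_toSet.biUnion fun a _ =>
        F.toRight.countable_toSet.biUnion fun b _ => (hG2c _ _).image _
    · exact F.toLeft.countable_toSet.biUnion fun a _ => (hG3c _ _).image _
  obtain ⟨S, hSc, hS⟩ := exists_closed_off G hG
  let D : Set X := {a | Sum.inl a ∈ S}
  let P : Set C(X, ℝ) := {f | Sum.inr f ∈ S}
  have hPc : P.Countable := hSc.preimage Sum.inr_injective
  have hx₀ : x₀ ∈ D := hS ∅ (by simp) (by simp [G])
  classical
  have p1 : ∀ a ∈ D, ∀ b ∈ D, Φ a b ∈ P := by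
    intro a ha b hb
    refine hS {Sum.inl a, Sum.inl b} ?_ ?_
    · intro z hz
      simp only [Finset.coe_insert, Finset.coe_singleton, mem_insert_iff, mem_singleton_iff] at hz
      rcases hz with rfl | rfl
      exacts [ha, hb]
    · refine Or.inl (Or.inl (Or.inr ?_))
      simp only [mem_iUnion, Finset.mem_toLeft]
      exact ⟨a, by simp, b, by simp, rfl⟩
  have p2 : ∀ a ∈ D, ∀ f ∈ P, G2 a f ⊆ P := by
    intro a ha f hf g hg
    refine hS {Sum.inl a, Sum.inr f} ?_ ?_
    · intro z hz
      simp only [Finset.coe_insert, Finset.coe_singleton, mem_insert_iff, mem_singleton_iff] at hz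
      rcases hz with rfl | rfl
      exacts [ha, hf]
    · refine Or.inl (Or.inr ?_)
      simp only [mem_iUnion, Finset.mem_toLeft, Finset.mem_toRight]
      exact ⟨a, by simp, f, by simp, g, hg, rfl⟩
  have p3 : ∀ a ∈ D, ∀ F : Finset C(X, ℝ), (F : Set C(X, ℝ)) ⊆ P → G3 a F ⊆ D := by
    intro a ha F hF b hb
    have e1 : (Finset.disjSum {a} F).toRight = F := by ext; simp
    refine hS (Finset.disjSum {a} F) ?_ ?_
    · intro z hz
      rcases z with z | z
      · have : z = a := by simpa using hz
        subst this
        exact ha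
      · exact hF (by simpa using hz)
    · refine Or.inr ?_
      simp only [mem_iUnion, Finset.mem_toLeft, e1]
      exact ⟨a, by simp, b, hb, rfl⟩
  let q : X → (P → ℝ) := fun x f => f.1 x
  have hqc : Continuous q := by fun_prop
  have hq : ∀ {x y}, q x = q y → ∀ f ∈ P, f x = f y := fun h f hf => congrFun h ⟨f, hf⟩
  have hdense : ∀ a ∈ D, ∀ y, y ≠ a → q y ∈ closure (q '' (D \ {a})) := by
    intro a ha y hya
    rw [mem_closure_iff]
    intro O hO hyO
    obtain ⟨I, u, hu, hsubO⟩ := isOpen_pi_iff.1 hO _ hyO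
    let F : Finset C(X, ℝ) := I.map (Function.Embedding.subtype _)
    have hF : (F : Set C(X, ℝ)) ⊆ P := by
      intro f hf
      simp only [F, Finset.coe_map, mem_image] at hf
      obtain ⟨g, -, rfl⟩ := hf
      exact g.2
    obtain ⟨b, hb, hbu⟩ := hG3 a F y hya (fun f => if h : f ∈ P then u ⟨f, h⟩ else univ) (by
      intro f hf
      simp only [F, Finset.mem_map] at hf
      obtain ⟨g, hg, rfl⟩ := hf
      have := hu g hg
      simpa using this)
    refine ⟨q b, hsubO fun g hg => ?_, b, ⟨p3 a ha F hF hb, hG3s a F hb⟩, rfl⟩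
    have := hbu g.1 (Finset.mem_map.2 ⟨g, hg, rfl⟩)
    simpa using this
  have hinj : Function.Injective q := by
    intro x x' hxx
    by_contra hne
    let N : Set X := {a ∈ D | q a ≠ q x}
    by_cases hA : q x ∈ closure (q '' N)
    · rw [hqc.isClosedMap.closure_image_eq_of_continuous hqc] at hA
      obtain ⟨y, hyN, hyx⟩ := hA
      obtain ⟨z, hzy, hqz⟩ : ∃ z, y ≠ z ∧ q z = q y := by
        by_cases h : y = x
        · exact ⟨x', h ▸ hne, by rw [hyx, hxx]⟩
        · exact ⟨x, h, hyx.symm⟩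
      have claim : ∀ a ∈ N, Φ a z z = Φ a z y := by
        intro a ha
        have hf : ∃ f ∈ P, f a ≠ f x := by
          by_contra! h
          exact ha.2 (funext fun f => h f.1 f.2)
        obtain ⟨f, hfP, hf⟩ := hf
        have hyf : f y = f x := hq hyx f hfP
        have hzf : f z = f y := hq hqz f hfP
        have e1 := hG2 a f z y fun g hg => hq hqz g (p2 a ha.1 f hfP hg)
        simp only [hzf] at e1
        have e2 : |f y - f a| ≠ 0 := by
          rw [hyf]
          exact abs_ne_zero.2 (sub_ne_zero.2 (Ne.symm hf))
        have e3 : Φ a z = Φ a y := smul_right_injective _ e2 e1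
        rw [e3]
        have hay : a ≠ y := by
          rintro rfl
          exact hf hyf
        have h1 : ContinuousAt (fun b => Φ a b) y :=
          ContinuousAt.comp (f := fun x => (a, x)) (g := fun p : X × X => Φ p.1 p.2)
            (hcont a y hay) (by fun_prop)
        have h2 : ContinuousAt (fun b => Φ a b z - Φ a b y) y :=
          ((continuous_eval_const (F := C(X, ℝ)) z).continuousAt.comp h1).sub
            ((continuous_eval_const (F := C(X, ℝ)) y).continuousAt.comp h1)
        have h3 := h2.continuousWithinAt.mem_closure (s := N) (t := {(0 : ℝ)}) hyN fun b hb => by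
          have := hq hqz _ (p1 a ha.1 b hb.1)
          simp [this]
        simp only [closure_singleton, mem_singleton_iff] at h3
        linarith
      have h1 : ContinuousAt (fun b => Φ b z) y :=
        ContinuousAt.comp (f := fun x => (x, z)) (g := fun p : X × X => Φ p.1 p.2)
          (hcont y z hzy) (by fun_prop)
      have h2 : ContinuousAt (fun b => Φ b z z - Φ b z y) y :=
        ((continuous_eval_const (F := C(X, ℝ)) z).continuousAt.comp h1).sub
          ((continuous_eval_const (F := C(X, ℝ)) y).continuousAt.comp h1)
      have h3 := h2.continuousWithinAt.mem_closure (s := N) (t := {(0 : ℝ)}) hyN fun b hb => by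
        simp [claim b hb]
      simp only [closure_singleton, mem_singleton_iff] at h3
      exact hsep y z hzy (by linarith)
    · rw [mem_closure_iff] at hA
      push Not at hA
      obtain ⟨O, hO, hxO, hON⟩ := hA
      have hON' : ∀ a ∈ D, q a ∈ O → q a = q x := by
        intro a ha haO
        by_contra h
        have : q a ∈ O ∩ q '' N := ⟨haO, a, ⟨ha, h⟩, rfl⟩
        rw [hON] at this
        exact this
      have hnext : ∀ a ∈ D, ∃ b ∈ D, b ≠ a ∧ q b = q x := by
        intro a ha
        obtain ⟨w, hwa, hw⟩ : ∃ w, w ≠ a ∧ q w = q x := by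
          by_cases h : x = a
          · exact ⟨x', fun h' => hne (h.trans h'.symm), hxx.symm⟩
          · exact ⟨x, h, rfl⟩
        obtain ⟨_, hbO, b, ⟨hbD, hba⟩, rfl⟩ :=
          mem_closure_iff.1 (hdense a ha w hwa) O hO (hw ▸ hxO)
        exact ⟨b, hbD, hba, hON' b hbD hbO⟩
      obtain ⟨a, ha, -, hqa⟩ := hnext x₀ hx₀
      obtain ⟨b, hb, hba, hqb⟩ := hnext a ha
      exact hsep a b hba.symm (hq (hqa.trans hqb.symm) _ (p1 a ha b hb))
  have := hPc.to_subtype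
  exact (hqc.isClosedEmbedding hinj).isEmbedding.metrizableSpace

def CPM.toCM (ρ : CPM X) : C(X × X, ℝ) := ⟨fun p => ρ.d p.1 p.2, ρ.cont⟩

theorem continuous_toCM : Continuous (CPM.toCM (X := X)) := by
  rw [continuous_iff_continuousAt]
  intro ρ
  rw [ContinuousAt, Metric.tendsto_nhds]
  intro ε hε
  let U : Set (X × X × ℝ) := {p | |p.2.2 - ρ.d p.1 p.2.1| < ε / 2}
  have hU : IsOpen U := by
    have h1 : Continuous fun p : X × X × ℝ => ρ.d p.1 p.2.1 :=
      ρ.cont.comp (f := fun p : X × X × ℝ => (p.1, p.2.1)) (by fun_prop)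
    exact isOpen_lt (by fun_prop) continuous_const
  have hgc : Continuous[_, vietoris _] (CPM.graph (X := X)) := continuous_induced_dom
  have ho : IsOpen {σ : CPM X | σ.graph ⊆ U} :=
    @IsOpen.preimage _ _ _ (vietoris _) _ hgc _ (isOpen_vietoris_sub hU)
  have hmem : ρ ∈ {σ : CPM X | σ.graph ⊆ U} := by
    rintro ⟨a, b, t⟩ ht
    replace ht : t = ρ.d a b := ht
    change |t - ρ.d a b| < ε / 2
    simpa [ht] using hε
  filter_upwards [ho.mem_nhds hmem] with σ hσ
  refine lt_of_le_of_lt ((ContinuousMap.dist_le (half_pos hε).le).2 fun p => ?_) (half_lt_self hε)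
  have : |σ.d p.1 p.2 - ρ.d p.1 p.2| < ε / 2 := @hσ (p.1, p.2, σ.d p.1 p.2) rfl
  exact this.le

end TwoThree

theorem two_three (X : Type*) [TopologicalSpace X] [CompactSpace X] [T2Space X]
    (h : ∃ Ψ : {p : X × X // p.1 ≠ p.2} → CPM X, Continuous Ψ ∧
        ∀ p : {p : X × X // p.1 ≠ p.2}, (Ψ p).d p.1.1 p.1.2 ≠ 0) : MetrizableSpace X := by
  classical
  obtain ⟨Ψ, hΨ, hne⟩ := h
  let Θ : {p : X × X // p.1 ≠ p.2} → C(X, ℝ) := fun p => (Ψ p).toCM.curry p.1.1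
  have hΘ : Continuous Θ := by
    have h1 : Continuous fun p => (Ψ p).toCM.curry :=
      ContinuousMap.continuous_curry.comp (continuous_toCM.comp hΨ)
    have h2 : Continuous fun p : {p : X × X // p.1 ≠ p.2} => p.1.1 := by fun_prop
    exact ContinuousEval.continuous_eval.comp (h1.prodMk h2)
  let Θ' : {p : X × X // p.1 ≠ p.2} → C(X, ℝ) := fun p => (1 + ‖Θ p‖)⁻¹ • Θ p
  have hpos : ∀ p, 0 < 1 + ‖Θ p‖ := fun p => by positivity
  have hΘ' : Continuous Θ' :=
    ((continuous_const.add hΘ.norm).inv₀ fun p => (hpos p).ne').smul hΘ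
  refine metrizable_of_sep (Φ := fun x y => if h : x ≠ y then Θ' ⟨(x, y), h⟩ else 0) ?_ ?_ ?_ ?_
  · intro x y hxy
    have hop : IsOpen {p : X × X | p.1 ≠ p.2} := isOpen_ne_fun continuous_fst continuous_snd
    refine ContinuousOn.continuousAt (s := {p : X × X | p.1 ≠ p.2}) ?_ (hop.mem_nhds hxy)
    have hc : Continuous fun p : {p : X × X | p.1 ≠ p.2} => Θ' ⟨p.1, p.2⟩ :=
      hΘ'.comp (continuous_subtype_val.subtype_mk _)
    refine continuousOn_iff_continuous_domRestrict.2 (hc.congr fun p => ?_)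
    have hp : p.1.1 ≠ p.1.2 := p.2
    simp [Set.domRestrict, hp]
  · intro x y
    split_ifs with h
    · simp only [Θ']
      rw [norm_smul, norm_inv, Real.norm_of_nonneg (hpos _).le, inv_mul_le_one₀ (hpos _)]
      linarith
    · simp
  · intro x
    simp
  · intro x y hxy
    have e1 : Θ ⟨(x, y), hxy⟩ x = 0 := (Ψ _).refl x
    have e2 : Θ ⟨(x, y), hxy⟩ y ≠ 0 := hne ⟨(x, y), hxy⟩
    simp only [hxy, ne_eq, not_false_eq_true, dif_pos, Θ', ContinuousMap.smul_apply, smul_eq_mul,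
      e1, mul_zero]
    exact (mul_ne_zero (inv_ne_zero (hpos _).ne') e2).symm

theorem stmt_12
    (X : Type*) [TopologicalSpace X] [CompactSpace X] [T2Space X] :
    List.TFAE [
      -- (1) there exists a continuous extension operator u : PM → PM(X)
      (∃ u : PartialCPM X → CPM X, Continuous u ∧
        ∀ (ρ : PartialCPM X) (x y : X), x ∈ ρ.dom → y ∈ ρ.dom →
          (u ρ).d x y = ρ.d x y),
      -- (2) there exists a continuous map Ψ : (X × X) ∖ Δ_X → PM(X) with
      --     Ψ_{(x,y)}(x,y) ≠ 0
      (∃ Ψ : {p : X × X // p.1 ≠ p.2} → CPM X, Continuous Ψ ∧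
        ∀ p : {p : X × X // p.1 ≠ p.2}, (Ψ p).d p.1.1 p.1.2 ≠ 0),
      -- (3) X is metrizable
      MetrizableSpace X] := by
  tfae_have 1 → 2 := one_two X
  tfae_have 2 → 3 := two_three X
  tfae_have 3 → 1 := three_one X
  tfae_finish

end
end
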